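/- arXiv:1202.6578 — 10 statements merged into one kernel-verified Lean document; each statement's English description precedes it below -/
import Mathlib

section
/- Let Λ be an additive subgroup of ℝ³ × ℝ such that (S ā, t) ∈ Λ whenever (ā, t) ∈ Λ and S ∈ SO(3). Then there exists an additive subgroup H of ℝ such that either Λ = {(0̄, t) : t ∈ H} or Λ = {(ā, t) : ā ∈ ℝ³, t ∈ H}. Conversely, every additive subgroup of either of these two forms is invariant under all maps (ā, t) ↦ (S ā, t) with S ∈ SO(3). -/
/-- A 3×3 real matrix is in SO(3) iff it is orthogonal with determinant 1. -/
def IsSO3 (S : Matrix (Fin 3) (Fin 3) ℝ) : Prop :=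
  S.transpose * S = 1 ∧ S.det = 1

theorem SO3aux_rot {c s : ℝ} (h : c ^ 2 + s ^ 2 = 1) :
    IsSO3 !![c, -s, 0; s, c, 0; 0, 0, 1] := by
  refine ⟨?_, ?_⟩
  · ext i j
    fin_cases i <;> fin_cases j <;>
      simp [Matrix.mul_apply, Fin.sum_univ_three] <;> linarith
  · simp [Matrix.det_fin_three]; linarith

theorem SO3aux_diag : IsSO3 !![1, 0, 0; 0, -1, 0; 0, 0, -1] := by
  refine ⟨?_, ?_⟩
  · ext i j
    fin_cases i <;> fin_cases j <;> simp [Matrix.mul_apply, Fin.sum_univ_three]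
  · simp [Matrix.det_fin_three]

theorem SO3aux_cyc : IsSO3 !![0, 1, 0; 0, 0, 1; 1, 0, 0] := by
  refine ⟨?_, ?_⟩
  · ext i j
    fin_cases i <;> fin_cases j <;> simp [Matrix.mul_apply, Fin.sum_univ_three]
  · simp [Matrix.det_fin_three]

theorem SO3aux_main (Λ : AddSubgroup ((Fin 3 → ℝ) × ℝ))
    (hΛ : ∀ S : Matrix (Fin 3) (Fin 3) ℝ, IsSO3 S → ∀ p ∈ Λ, (S.mulVec p.1, p.2) ∈ Λ)
    (a b d t : ℝ) (ha : a ≠ 0) (hp : ((![a, b, d], t) : (Fin 3 → ℝ) × ℝ) ∈ Λ)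
    (v : Fin 3 → ℝ) : (v, (0 : ℝ)) ∈ Λ := by
  have cyc : ∀ x y z u : ℝ, ((![x, y, z], u) : (Fin 3 → ℝ) × ℝ) ∈ Λ →
      ((![y, z, x], u) : (Fin 3 → ℝ) × ℝ) ∈ Λ := by
    intro x y z u h
    have := hΛ _ SO3aux_cyc _ h
    convert this using 2
    ext i
    fin_cases i <;> simp [Matrix.mulVec, dotProduct, Fin.sum_univ_three]
  have small : ∀ x : ℝ, 0 ≤ x → x ≤ 1 →
      ((![2 * x * a, 0, 0], 0) : (Fin 3 → ℝ) × ℝ) ∈ Λ := by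
    intro x h0 h1
    have hs : (1 - x / 2) ^ 2 + Real.sqrt (1 - (1 - x / 2) ^ 2) ^ 2 = 1 := by
      rw [Real.sq_sqrt (by nlinarith)]; ring
    generalize Real.sqrt (1 - (1 - x / 2) ^ 2) = s at hs
    have hD : ((![x * a, x * b, 0], 0) : (Fin 3 → ℝ) × ℝ) ∈ Λ := by
      have h2 := hΛ _ (SO3aux_rot hs) _ hp
      have h3 := hΛ _ (SO3aux_rot (s := -s) (by simpa using hs)) _ hp
      have h4 := Λ.sub_mem (Λ.sub_mem (Λ.add_mem hp hp) h2) h3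
      convert h4 using 1
      refine Prod.ext ?_ ?_
      · ext i
        fin_cases i <;> simp [Matrix.vecHead, Matrix.vecTail] <;> ring
      · simp
    have h5 := Λ.add_mem hD (hΛ _ SO3aux_diag _ hD)
    convert h5 using 1
    refine Prod.ext ?_ ?_
    · ext i
      fin_cases i <;> simp [Matrix.vecHead, Matrix.vecTail] <;> ring
    · simp
  have pos : ∀ x : ℝ, 0 ≤ x →
      ((![2 * x * a, 0, 0], 0) : (Fin 3 → ℝ) × ℝ) ∈ Λ := by
    intro x h0
    obtain ⟨n, hn⟩ := exists_nat_gt x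
    have hn0 : (0 : ℝ) < n := lt_of_le_of_lt h0 hn
    have h := Λ.nsmul_mem (small (x / n) (by positivity) ((div_le_one hn0).2 hn.le)) n
    convert h using 1
    refine Prod.ext ?_ ?_
    · ext i
      fin_cases i <;> simp
      field_simp
    · simp
  have all : ∀ r : ℝ, ((![r, 0, 0], 0) : (Fin 3 → ℝ) × ℝ) ∈ Λ := by
    intro r
    rcases le_total 0 (r / (2 * a)) with h | h
    · convert pos _ h using 3
      field_simp
    · convert Λ.neg_mem (pos (-(r / (2 * a))) (by linarith)) using 1
      refine Prod.ext ?_ ?_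
      · ext i
        fin_cases i <;> simp
        field_simp
      · simp
  have h := Λ.add_mem (Λ.add_mem (all (v 0)) (cyc _ _ _ _ (cyc _ _ _ _ (all (v 1)))))
    (cyc _ _ _ _ (all (v 2)))
  convert h using 1
  refine Prod.ext ?_ ?_
  · ext i
    fin_cases i <;> simp
  · simp

/-- An additive subgroup `Λ` of `ℝ³ × ℝ` is invariant under all maps
`(ā, t) ↦ (S ā, t)` with `S ∈ SO(3)` if and only if there is an additive subgroup
`H` of `ℝ` such that `Λ = {0̄} × H` or `Λ = ℝ³ × H`. -/
theorem SO3_invariant_addSubgroups (Λ : AddSubgroup ((Fin 3 → ℝ) × ℝ)) :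
    (∀ S : Matrix (Fin 3) (Fin 3) ℝ, IsSO3 S →
        ∀ p ∈ Λ, (S.mulVec p.1, p.2) ∈ Λ) ↔
      ∃ H : AddSubgroup ℝ,
        (Λ : Set ((Fin 3 → ℝ) × ℝ)) = {p | p.1 = 0 ∧ p.2 ∈ H} ∨
        (Λ : Set ((Fin 3 → ℝ) × ℝ)) = {p | p.2 ∈ H} := by
  constructor
  · intro hΛ
    refine ⟨Λ.map (AddMonoidHom.snd _ _), ?_⟩
    by_cases h0 : ∀ p ∈ Λ, p.1 = 0
    · left
      ext ⟨a, t⟩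
      simp only [SetLike.mem_coe, Set.mem_ofPred_eq, AddSubgroup.mem_map]
      constructor
      · intro h
        exact ⟨h0 _ h, _, h, rfl⟩
      · rintro ⟨rfl, ⟨a, u⟩, h, rfl⟩
        have := h0 _ h
        simp only at this
        subst this
        exact h
    · right
      push Not at h0
      obtain ⟨⟨a, u⟩, hp, hne⟩ := h0
      have key : ∀ v : Fin 3 → ℝ, (v, (0 : ℝ)) ∈ Λ := by
        have e : a = ![a 0, a 1, a 2] := by
          ext i; fin_cases i <;> rfl
        have c1 := hΛ _ SO3aux_cyc _ hp
        have c2 := hΛ _ SO3aux_cyc _ c1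
        have e1 : (!![0, 1, 0; 0, 0, 1; 1, 0, 0] : Matrix (Fin 3) (Fin 3) ℝ).mulVec a
            = ![a 1, a 2, a 0] := by
          ext i
          fin_cases i <;> simp [Matrix.mulVec, dotProduct, Fin.sum_univ_three]
        have e2 : (!![0, 1, 0; 0, 0, 1; 1, 0, 0] : Matrix (Fin 3) (Fin 3) ℝ).mulVec
            ![a 1, a 2, a 0] = ![a 2, a 0, a 1] := by
          ext i
          fin_cases i <;> simp [Matrix.mulVec, dotProduct, Fin.sum_univ_three]
        simp only [e1] at c1 c2
        rw [e2] at c2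
        by_cases z0 : a 0 = 0
        · by_cases z1 : a 1 = 0
          · by_cases z2 : a 2 = 0
            · exfalso
              apply hne
              ext i
              fin_cases i <;> simp [z0, z1, z2]
            · exact SO3aux_main Λ hΛ _ _ _ _ z2 c2
          · exact SO3aux_main Λ hΛ _ _ _ _ z1 c1
        · rw [e] at hp
          exact SO3aux_main Λ hΛ _ _ _ _ z0 hp
      ext ⟨b, t⟩
      simp only [SetLike.mem_coe, Set.mem_ofPred_eq, AddSubgroup.mem_map]
      constructor
      · intro h
        exact ⟨_, h, rfl⟩
      · rintro ⟨⟨c, w⟩, h, rfl⟩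
        have := Λ.add_mem h (key (b - c))
        simpa using this
  · rintro ⟨H, h | h⟩ S _ p hp
    · rw [← SetLike.mem_coe, h] at hp ⊢
      obtain ⟨h1, h2⟩ := hp
      exact ⟨by simp [h1], h2⟩
    · rw [← SetLike.mem_coe, h] at hp ⊢
      exact hp
end

section
/- An equivalence relation ∼ on ℝ³ × ℝ is 𝒢_N-invariant if and only if there exists an additive subgroup H of ℝ such that either (i) for all points, (x̄, t) ∼ (ȳ, s) ⟺ (x̄ = ȳ and s − t ∈ H), or (ii) for all points, (x̄, t) ∼ (ȳ, s) ⟺ s − t ∈ H. -/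
/-- A relation on `ℝ³ × ℝ` is invariant under the Newton group `𝒢_N` (the group of
maps `(x̄, t) ↦ (S x̄ + b̄, t + b⁴)` with `S ∈ SO(3)`) if it is preserved by all
these maps. -/
def IsNewtonInvariant (r : ((Fin 3 → ℝ) × ℝ) → ((Fin 3 → ℝ) × ℝ) → Prop) : Prop :=
  ∀ S : Matrix (Fin 3) (Fin 3) ℝ, IsSO3 S → ∀ b : (Fin 3 → ℝ) × ℝ,
    ∀ p q : (Fin 3 → ℝ) × ℝ, r p q →
      r (S.mulVec p.1 + b.1, p.2 + b.2) (S.mulVec q.1 + b.1, q.2 + b.2)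

theorem so3_diag (a b c : ℝ) (ha : a * a = 1) (hb : b * b = 1) (hc : c * c = 1)
    (h : a * b * c = 1) : IsSO3 !![a, 0, 0; 0, b, 0; 0, 0, c] := by
  constructor
  · ext i j; fin_cases i <;> fin_cases j <;> simp [Matrix.mul_apply, Fin.sum_univ_three, ha, hb, hc]
  · simp [Matrix.det_fin_three, h]

theorem so3_cyc : IsSO3 !![0, 0, 1; 1, 0, 0; 0, 1, 0] := by
  constructor
  · ext i j; fin_cases i <;> fin_cases j <;> simp [Matrix.mul_apply, Fin.sum_univ_three]
  · simp [Matrix.det_fin_three]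

theorem so3_rot (a b : ℝ) (h : a * a + b * b = 1) : IsSO3 !![a, -b, 0; b, a, 0; 0, 0, 1] := by
  constructor
  · ext i j
    fin_cases i <;> fin_cases j <;> simp [Matrix.mul_apply, Fin.sum_univ_three] <;> linarith
  · simp [Matrix.det_fin_three, h]

theorem full_of_ne (V : AddSubgroup (Fin 3 → ℝ))
    (hV : ∀ S, IsSO3 S → ∀ v ∈ V, S.mulVec v ∈ V)
    (v : Fin 3 → ℝ) (hv : v ≠ 0) (hd : ∀ S, IsSO3 S → S.mulVec v - v ∈ V) (w : Fin 3 → ℝ) :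
    w ∈ V := by
  have cyc : ∀ a b c : ℝ, ![a, b, c] ∈ V → ![c, a, b] ∈ V := by
    intro a b c h
    have := hV _ so3_cyc _ h
    convert this using 1
    ext i; fin_cases i <;> simp [Matrix.mulVec, dotProduct, Fin.sum_univ_three]
  have d1 := so3_diag 1 (-1) (-1) (by norm_num) (by norm_num) (by norm_num) (by norm_num)
  have d2 := so3_diag (-1) 1 (-1) (by norm_num) (by norm_num) (by norm_num) (by norm_num)
  have d3 := so3_diag (-1) (-1) 1 (by norm_num) (by norm_num) (by norm_num) (by norm_num)
  have h1 : ∃ c : ℝ, c ≠ 0 ∧ ![c, 0, 0] ∈ V := by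
    obtain ⟨i, hi⟩ := Function.ne_iff.1 hv
    have u3 := hd _ d3
    have u2 := hd _ d2
    have w3 := hV _ d1 _ u3
    have w2 := hV _ d1 _ u2
    fin_cases i
    · refine ⟨-4 * v 0, by simpa using hi, ?_⟩
      convert V.add_mem u3 w3 using 1
      ext i; fin_cases i <;> simp [Matrix.mulVec, dotProduct, Fin.sum_univ_three, Matrix.vecHead, Matrix.vecTail] <;> ring
    · refine ⟨-4 * v 1, by simpa using hi, cyc _ _ _ (cyc _ _ _ ?_)⟩
      convert V.sub_mem u3 w3 using 1
      ext i; fin_cases i <;> simp [Matrix.mulVec, dotProduct, Fin.sum_univ_three, Matrix.vecHead, Matrix.vecTail] <;> ring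
    · refine ⟨-4 * v 2, by simpa using hi, cyc _ _ _ ?_⟩
      convert V.sub_mem u2 w2 using 1
      ext i; fin_cases i <;> simp [Matrix.mulVec, dotProduct, Fin.sum_univ_three, Matrix.vecHead, Matrix.vecTail] <;> ring
  obtain ⟨c, hc, hcV⟩ := h1
  have small : ∀ s : ℝ, |s| ≤ 1 → ![2 * c * s, 0, 0] ∈ V := by
    intro s hs
    have hs2 : 0 ≤ 1 - s * s := by
      have := abs_le.1 hs
      nlinarith
    have hq := Real.mul_self_sqrt hs2
    have r1 := hV _ (so3_rot s (√(1 - s * s)) (by linarith)) _ hcV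
    have r2 := hV _ (so3_rot s (-√(1 - s * s)) (by linarith)) _ hcV
    convert V.add_mem r1 r2 using 1
    ext i; fin_cases i <;> simp [Matrix.mulVec, dotProduct, Fin.sum_univ_three]; ring
  have all : ∀ x : ℝ, ![x, 0, 0] ∈ V := by
    intro x
    obtain ⟨n, hn⟩ := exists_nat_gt (|x / (2 * c)|)
    have hn0 : (0 : ℝ) < n := lt_of_le_of_lt (abs_nonneg _) hn
    have := small (x / (2 * c) / n) (by
      rw [abs_div, abs_of_pos hn0, div_le_one hn0]; exact hn.le)
    convert V.nsmul_mem this n using 1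
    ext i; fin_cases i <;> simp
    field_simp
  have := V.add_mem (V.add_mem (all (w 0)) (cyc _ _ _ (all (w 1)))) (cyc _ _ _ (cyc _ _ _ (all (w 2))))
  convert this using 1
  ext i; fin_cases i <;> simp

theorem newton_invariant_equivalences
    (r : ((Fin 3 → ℝ) × ℝ) → ((Fin 3 → ℝ) × ℝ) → Prop) (hr : Equivalence r) :
    IsNewtonInvariant r ↔
      ∃ H : AddSubgroup ℝ,
        (∀ p q : (Fin 3 → ℝ) × ℝ, r p q ↔ p.1 = q.1 ∧ q.2 - p.2 ∈ H) ∨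
        (∀ p q : (Fin 3 → ℝ) × ℝ, r p q ↔ q.2 - p.2 ∈ H) := by
  constructor
  · intro hI
    have so1 : IsSO3 1 := by simp [IsSO3]
    have tr : ∀ b p q, r p q → r (p + b) (q + b) := by
      intro b p q h
      have := hI 1 so1 b p q h
      rw [Matrix.one_mulVec, Matrix.one_mulVec] at this
      exact this
    let K : AddSubgroup ((Fin 3 → ℝ) × ℝ) :=
      { carrier := {k | r 0 k}
        zero_mem' := hr.refl 0
        add_mem' := by
          intro a b ha hb
          have := tr b 0 a ha
          rw [zero_add] at this
          exact hr.trans hb this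
        neg_mem' := by
          intro a ha
          have := tr (-a) 0 a ha
          rw [zero_add, add_neg_cancel] at this
          exact hr.symm this }
    have hK : ∀ p q, r p q ↔ q - p ∈ K := by
      intro p q
      constructor
      · intro h
        have := tr (-p) p q h
        rw [add_neg_cancel, ← sub_eq_add_neg] at this
        exact this
      · intro h
        have := tr p 0 (q - p) h
        rwa [zero_add, sub_add_cancel] at this
    have hS : ∀ S, IsSO3 S → ∀ k ∈ K, (S.mulVec k.1, k.2) ∈ K := by
      intro S h k hk
      have := hI S h 0 0 k hk
      simp only [Prod.fst_zero, Prod.snd_zero, Matrix.mulVec_zero, add_zero] at this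
      exact this
    by_cases hc : ∀ k ∈ K, k.1 = 0
    · refine ⟨K.comap (AddMonoidHom.inr _ _), Or.inl fun p q => ?_⟩
      rw [hK, AddSubgroup.mem_comap, AddMonoidHom.inr_apply]
      constructor
      · intro h
        have h0 := hc _ h
        refine ⟨(sub_eq_zero.1 h0).symm, ?_⟩
        convert h using 1
        exact Prod.ext h0.symm rfl
      · rintro ⟨h0, h⟩
        convert h using 1
        exact Prod.ext (by simp [h0]) rfl
    · push Not at hc
      obtain ⟨k, hk, hk0⟩ := hc
      have full := full_of_ne (K.comap (AddMonoidHom.inl (Fin 3 → ℝ) ℝ))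
        (fun S h v hv => hS S h (v, 0) hv) k.1 hk0 (fun S h => by
          have := K.sub_mem (hS S h k hk) hk
          rw [AddSubgroup.mem_comap, AddMonoidHom.inl_apply]
          convert this using 1
          exact Prod.ext rfl (by simp))
      refine ⟨K.comap (AddMonoidHom.inr _ _), Or.inr fun p q => ?_⟩
      rw [hK, AddSubgroup.mem_comap, AddMonoidHom.inr_apply]
      have hf := full (q.1 - p.1)
      rw [AddSubgroup.mem_comap, AddMonoidHom.inl_apply] at hf
      have : (q.1 - p.1, (0 : ℝ)) + (0, q.2 - p.2) = q - p := Prod.ext (by simp) (by simp)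
      rw [← this]
      exact K.add_mem_cancel_left hf
  · rintro ⟨H, h | h⟩ S hS b p q hpq
    · rw [h] at hpq ⊢
      refine ⟨by simp [hpq.1], ?_⟩
      simpa using hpq.2
    · rw [h] at hpq ⊢
      simpa using hpq
end

section
/- Let ∼ be a nontrivial C𝒢_N-invariant equivalence relation on ℝ³ × ℝ which is not the worldline relation (i.e., ∼ is not the relation given by (x̄, t) ∼ (ȳ, s) ⟺ x̄ = ȳ). Then ∼ is standard Newtonian simultaneity: (x̄, t) ∼ (ȳ, s) ⟺ t = s. -/
/-- A relation on `ℝ³ × ℝ` is invariant under the conformal Newton group `C𝒢_N`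
(the group of maps `(x̄, t) ↦ (λ S x̄ + b̄, λ t + b⁴)` with `λ > 0`, `S ∈ SO(3)`)
if it is preserved by all these maps. -/
def IsConformalNewtonInvariant
    (r : ((Fin 3 → ℝ) × ℝ) → ((Fin 3 → ℝ) × ℝ) → Prop) : Prop :=
  ∀ l : ℝ, 0 < l → ∀ S : Matrix (Fin 3) (Fin 3) ℝ, IsSO3 S →
    ∀ b : (Fin 3 → ℝ) × ℝ, ∀ p q : (Fin 3 → ℝ) × ℝ, r p q →
      r (l • S.mulVec p.1 + b.1, l * p.2 + b.2)
        (l • S.mulVec q.1 + b.1, l * q.2 + b.2)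

/-- Any nontrivial `C𝒢_N`-invariant equivalence relation on `ℝ³ × ℝ` which is not
the worldline relation `(x̄, t) ∼ (ȳ, s) ↔ x̄ = ȳ` is standard Newtonian
simultaneity `(x̄, t) ∼ (ȳ, s) ↔ t = s`. -/
theorem conformal_newton_invariant_is_simultaneity
    (r : ((Fin 3 → ℝ) × ℝ) → ((Fin 3 → ℝ) × ℝ) → Prop) (hr : Equivalence r)
    (hinv : IsConformalNewtonInvariant r)
    (hnot_total : ¬ ∀ p q : (Fin 3 → ℝ) × ℝ, r p q)
    (hnot_id : ¬ ∀ p q : (Fin 3 → ℝ) × ℝ, r p q → p = q)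
    (hnot_wl : ¬ ∀ p q : (Fin 3 → ℝ) × ℝ, (r p q ↔ p.1 = q.1)) :
    ∀ p q : (Fin 3 → ℝ) × ℝ, r p q ↔ p.2 = q.2 := by
  have hmat : ∀ l : ℝ, 0 < l → ∀ S : Matrix (Fin 3) (Fin 3) ℝ, IsSO3 S → ∀ v t,
      r 0 (v, t) → r 0 (l • S.mulVec v, l * t) := by
    intro l hl S hS v t h
    have := hinv l hl S hS 0 _ _ h
    simp at this
    exact this
  have hone : IsSO3 1 := by constructor <;> simp
  have htr : ∀ b p q : (Fin 3 → ℝ) × ℝ, r p q → r (p + b) (q + b) := by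
    intro b p q h
    have := hinv 1 one_pos 1 hone b _ _ h
    simp at this
    exact this
  have hneg : ∀ p, r 0 p → r 0 (-p) := by
    intro p h
    have := htr (-p) _ _ h
    simp only [zero_add, add_neg_cancel] at this
    exact hr.symm this
  have hadd : ∀ p q, r 0 p → r 0 q → r 0 (p + q) := by
    intro p q hp hq
    have := htr q _ _ hp
    rw [zero_add] at this
    exact hr.trans hq this
  have hpos : ∀ l : ℝ, 0 < l → ∀ p, r 0 p → r 0 (l • p) := by
    intro l hl p hp
    have := hmat l hl 1 hone p.1 p.2 hp
    rw [Matrix.one_mulVec] at this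
    exact this
  have hsmul : ∀ (l : ℝ) p, r 0 p → r 0 (l • p) := by
    intro l p hp
    rcases lt_trichotomy l 0 with h | h | h
    · have := hneg _ (hpos (-l) (by linarith) p hp)
      simpa using this
    · subst h
      rw [zero_smul]
      exact hr.refl _
    · exact hpos l h p hp
  have hsub : ∀ p q, r p q ↔ r 0 (q - p) := by
    intro p q
    constructor
    · intro h
      have := htr (-p) _ _ h
      simpa [sub_eq_add_neg] using this
    · intro h
      have := htr p _ _ h
      simpa using this
  have hD1 : ∀ a b c t, r 0 (![a, b, c], t) → r 0 (![a, -b, -c], t) := by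
    intro a b c t h
    have := hmat 1 one_pos !![1, 0, 0; 0, -1, 0; 0, 0, -1] (by
      constructor
      · ext i j
        fin_cases i <;> fin_cases j <;> simp [Matrix.mul_apply, Fin.sum_univ_three]
      · simp [Matrix.det_fin_three]) _ _ h
    convert this using 2
    · ext i; fin_cases i <;> simp [Matrix.mulVec, dotProduct, Fin.sum_univ_three]
    · simp
  have hP : ∀ a b c t, r 0 (![a, b, c], t) → r 0 (![b, c, a], t) := by
    intro a b c t h
    have := hmat 1 one_pos !![0, 1, 0; 0, 0, 1; 1, 0, 0] (by
      constructor
      · ext i j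
        fin_cases i <;> fin_cases j <;> simp [Matrix.mul_apply, Fin.sum_univ_three]
      · simp [Matrix.det_fin_three]) _ _ h
    convert this using 2
    · ext i; fin_cases i <;> simp [Matrix.mulVec, dotProduct, Fin.sum_univ_three]
    · simp
  have heta : ∀ v : Fin 3 → ℝ, v = ![v 0, v 1, v 2] := by
    intro v; ext i; fin_cases i <;> rfl
  -- a vector with nonzero first coordinate generates all spatial vectors
  have hsp : ∀ a b c t, a ≠ 0 → r 0 (![a, b, c], t) → ∀ w, r 0 (w, 0) := by
    intro a b c t ha h
    have h1 : r 0 (![-a, -b, c], t) := 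
      hP _ _ _ _ (hD1 _ _ _ _ (hP _ _ _ _ (hP _ _ _ _ h)))
    have h2 : r 0 (![2 * a, 2 * b, 0], 0) := by
      have := hadd _ _ h (hneg _ h1)
      convert this using 1
      ext i
      · fin_cases i <;> simp <;> ring
      · simp
    have h3 : r 0 (![1, 0, 0], 0) := by
      have := hsmul (1 / (4 * a)) _ (hadd _ _ h2 (hD1 _ _ _ _ h2))
      convert this using 1
      ext i
      · fin_cases i <;> simp <;> field_simp <;> norm_num
      · simp
    have h4 := hP _ _ _ _ h3
    have h5 := hP _ _ _ _ h4
    intro w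
    have := hadd _ _ (hadd _ _ (hsmul (w 0) _ h3) (hsmul (w 1) _ h5)) (hsmul (w 2) _ h4)
    convert this using 1
    ext i
    · fin_cases i <;> simp
    · simp
  have hsp' : ∀ v t, v ≠ 0 → r 0 (v, t) → ∀ w, r 0 (w, 0) := by
    intro v t hv h
    rw [heta v] at h
    by_cases h0 : v 0 = 0
    · by_cases h1 : v 1 = 0
      · by_cases h2 : v 2 = 0
        · exact absurd (by rw [heta v, h0, h1, h2]; ext i; fin_cases i <;> rfl) hv
        · exact hsp _ _ _ _ h2 (hP _ _ _ _ (hP _ _ _ _ h))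
      · exact hsp _ _ _ _ h1 (hP _ _ _ _ h)
    · exact hsp _ _ _ _ h0 h
  have htime : ∀ t, t ≠ 0 → r 0 (0, t) → ∀ s, r 0 (0, s) := by
    intro t ht h s
    have := hsmul (s / t) _ h
    convert this using 1
    ext i
    · simp
    · simp [ht]
  by_cases hex : ∃ v t, v ≠ 0 ∧ r 0 (v, t)
  · obtain ⟨v, t, hv, h⟩ := hex
    have hall := hsp' v t hv h
    have ht0 : ∀ w s, r 0 (w, s) → s = 0 := by
      intro w s hw
      by_contra hs
      have h0 : r 0 (0, s) := by
        have := hadd _ _ hw (hall (-w))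
        simpa using this
      have hT := htime s hs h0
      apply hnot_total
      intro p q
      rw [hsub]
      have := hadd _ _ (hall (q - p).1) (hT (q - p).2)
      simp at this
      exact this
    intro p q
    rw [hsub]
    constructor
    · intro h
      have := ht0 _ _ h
      change q.2 - p.2 = 0 at this
      linarith
    · intro h
      have h' := hall (q - p).1
      convert h' using 1
      ext i
      · rfl
      · simp [h]
  · exfalso
    push Not at hex
    have hv0 : ∀ v t, r 0 (v, t) → v = 0 := by
      intro v t h
      by_contra hv
      exact hex v t hv h
    by_cases hT : ∃ t, t ≠ 0 ∧ r 0 (0, t)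
    · obtain ⟨t, ht, h⟩ := hT
      apply hnot_wl
      intro p q
      rw [hsub]
      constructor
      · intro h
        have := hv0 _ _ h
        exact (sub_eq_zero.mp this).symm
      · intro h'
        have := htime t ht h (q - p).2
        convert this using 1
        ext i
        · simp [h']
        · rfl
    · push Not at hT
      apply hnot_id
      intro p q h
      rw [hsub] at h
      have h1 := hv0 _ _ h
      have h2 : (q - p).2 = 0 := by
        by_contra hne
        apply hT _ hne
        convert h using 1
        ext i
        · exact (congrFun h1 i).symm
        · rfl
      have : q - p = 0 := Prod.ext h1 h2
      exact (sub_eq_zero.mp this).symm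
end

section
/- Let Λ be an additive subgroup of ℝ⁴ such that B(Λ) ⊆ Λ for every proper orthochronous Lorentz transformation B. Then Λ = {0} or Λ = ℝ⁴. -/
noncomputable section

/-- Spacetime `ℝ⁴`, identified with `ℝ³ × ℝ`. -/
abbrev V4 : Type := (Fin 3 → ℝ) × ℝ

/-- The Minkowski form `g_c(x, y) = x̄ ⬝ ȳ - c² x⁴ y⁴`. -/
def mink (c : ℝ) (x y : V4) : ℝ := (∑ i, x.1 i * y.1 i) - c ^ 2 * x.2 * y.2

/-- A vector is future timelike if `g_c(u, u) < 0` and `u⁴ > 0`. -/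
def FutureTimelike (c : ℝ) (u : V4) : Prop := mink c u u < 0 ∧ 0 < u.2

/-- A linear map is a Lorentz transformation if it preserves the Minkowski form. -/
def IsLorentz (c : ℝ) (B : V4 →ₗ[ℝ] V4) : Prop :=
  ∀ x y : V4, mink c (B x) (B y) = mink c x y

/-- A linear map is orthochronous if it maps future timelike vectors to future
timelike vectors. -/
def IsOrthochronous (c : ℝ) (B : V4 →ₗ[ℝ] V4) : Prop :=
  ∀ u : V4, FutureTimelike c u → FutureTimelike c (B u)

/-- A linear map is proper if its determinant is 1. -/
def IsProper (B : V4 →ₗ[ℝ] V4) : Prop := LinearMap.det B = 1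

/-- Null rotation with parameters `a b`, fixing the null direction `(0,0,1,1/d)`. -/
def nrot (d a b : ℝ) : V4 →ₗ[ℝ] V4 where
  toFun v :=
    (![v.1 0 + a * (v.1 2 - d * v.2), v.1 1 + b * (v.1 2 - d * v.2),
      v.1 2 - (a * v.1 0 + b * v.1 1 + (a ^ 2 + b ^ 2) / 2 * (v.1 2 - d * v.2))],
      v.2 - (a * v.1 0 + b * v.1 1 + (a ^ 2 + b ^ 2) / 2 * (v.1 2 - d * v.2)) / d)
  map_add' v w := by
    ext i
    · fin_cases i <;> simp <;> ring
    · simp; ring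
  map_smul' r v := by
    ext i
    · fin_cases i <;> simp <;> ring
    · simp; ring

/-- Reflection of the first two coordinates. -/
def refl2 : V4 →ₗ[ℝ] V4 where
  toFun v := (![-v.1 0, -v.1 1, v.1 2], v.2)
  map_add' v w := by
    ext i
    · fin_cases i <;> simp <;> ring
    · simp
  map_smul' r v := by
    ext i
    · fin_cases i <;> simp
    · simp

lemma v4_ext {v w : V4} (h0 : v.1 0 = w.1 0) (h1 : v.1 1 = w.1 1) (h2 : v.1 2 = w.1 2)
    (h3 : v.2 = w.2) : v = w := by
  ext i
  · fin_cases i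
    · exact h0
    · exact h1
    · exact h2
  · exact h3

lemma nrot_comp (d a b a' b' : ℝ) (hd : d ≠ 0) :
    nrot d a b ∘ₗ nrot d a' b' = nrot d (a + a') (b + b') := by
  refine LinearMap.ext fun v => v4_ext ?_ ?_ ?_ ?_ <;> simp [nrot] <;> field_simp <;> ring

lemma nrot_zero (d : ℝ) : nrot d 0 0 = LinearMap.id := by
  refine LinearMap.ext fun v => v4_ext ?_ ?_ ?_ ?_ <;> simp [nrot]

lemma refl2_sq : refl2 ∘ₗ refl2 = LinearMap.id := by
  refine LinearMap.ext fun v => v4_ext ?_ ?_ ?_ ?_ <;> simp [refl2]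

lemma refl2_nrot (d a b : ℝ) : refl2 ∘ₗ nrot d a b ∘ₗ refl2 = nrot d (-a) (-b) := by
  refine LinearMap.ext fun v => v4_ext ?_ ?_ ?_ ?_ <;> simp [refl2, nrot] <;> ring

lemma nrot_proper (d a b : ℝ) (hd : d ≠ 0) : IsProper (nrot d a b) := by
  have h1 : nrot d (a/2) (b/2) ∘ₗ nrot d (a/2) (b/2) = nrot d a b := by
    rw [nrot_comp _ _ _ _ _ hd]; simp
  have h2 : nrot d (a/2) (b/2) ∘ₗ nrot d (-(a/2)) (-(b/2)) = LinearMap.id := by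
    rw [nrot_comp _ _ _ _ _ hd]; simp [nrot_zero]
  have h3 := congrArg LinearMap.det (refl2_nrot d (a/2) (b/2))
  have h4 := congrArg LinearMap.det refl2_sq
  have h5 := congrArg LinearMap.det h1
  have h6 := congrArg LinearMap.det h2
  simp only [LinearMap.det_comp, LinearMap.det_id] at h3 h4 h5 h6
  unfold IsProper
  rw [← h5]
  rw [← h3] at h6
  linear_combination h6 - LinearMap.det (nrot d (a/2) (b/2)) ^ 2 * h4

lemma nrot_lorentz (c d a b : ℝ) (hd : d ≠ 0) (h : d ^ 2 = c ^ 2) : IsLorentz c (nrot d a b) := by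
  intro x y
  simp only [mink, ← h, nrot, Fin.sum_univ_three, LinearMap.coe_mk, AddHom.coe_mk]
  simp
  field_simp
  ring

lemma nrot_ortho (c d a b : ℝ) (hd : d ≠ 0) (h : d ^ 2 = c ^ 2) :
    IsOrthochronous c (nrot d a b) := by
  rintro v ⟨hv, ht⟩
  have hL := nrot_lorentz c d a b hd h v v
  refine ⟨hL ▸ hv, ?_⟩
  have hw : (nrot d a b v).1 2 - d * (nrot d a b v).2 = v.1 2 - d * v.2 := by
    simp [nrot]; field_simp; ring
  rw [← hL] at hv
  have hv0 := hL ▸ hv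
  generalize nrot d a b v = v' at *
  simp only [mink, Fin.sum_univ_three, ← h] at hv hv0
  have hd2 : 0 < d ^ 2 := by positivity
  have e1 : (v.1 2 - d * v.2) * (v.1 2 + d * v.2) < 0 := by
    nlinarith [sq_nonneg (v.1 0), sq_nonneg (v.1 1)]
  have e2 : (v.1 2 - d * v.2) * (v'.1 2 + d * v'.2) < 0 := by
    rw [← hw]
    nlinarith [sq_nonneg (v'.1 0), sq_nonneg (v'.1 1)]
  have e3 : d * (v.1 2 - d * v.2) < 0 := by
    by_contra hcon
    push Not at hcon
    have : d * (v.1 2 + d * v.2) > 0 := by nlinarith [mul_pos hd2 ht]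
    nlinarith [mul_nonneg hcon this.le, mul_pos_of_neg_of_neg e1 (neg_neg_of_pos hd2)]
  have e4 : 0 < d * (v'.1 2 + d * v'.2) := by
    by_contra hcon
    push Not at hcon
    nlinarith [mul_nonneg_of_nonpos_of_nonpos e3.le hcon,
      mul_pos_of_neg_of_neg e2 (neg_neg_of_pos hd2)]
  have e5 : 0 < d ^ 2 * v'.2 := by
    have : d * (v'.1 2 - d * v'.2) < 0 := hw ▸ e3
    nlinarith
  exact pos_of_mul_pos_right e5 hd2.le

lemma line_of_mem (d : ℝ) (hd : d ≠ 0) (Λ : AddSubgroup V4)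
    (hΛ : ∀ a b, ∀ v ∈ Λ, nrot d a b v ∈ Λ) (v : V4) (hv : v ∈ Λ)
    (h : v.1 2 - d * v.2 ≠ 0 ∨ v.1 0 ≠ 0 ∨ v.1 1 ≠ 0) (s : ℝ) :
    ((![0, 0, s], s / d) : V4) ∈ Λ := by
  by_cases hw : v.1 2 - d * v.2 = 0
  · have key : ∀ a b, ((![0, 0, -(a * v.1 0 + b * v.1 1)],
        -(a * v.1 0 + b * v.1 1) / d) : V4) ∈ Λ := by
      intro a b
      convert Λ.sub_mem (hΛ a b v hv) hv using 1
      apply v4_ext <;> simp [nrot, hw]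
      ring
    rcases h with h | h | h
    · exact absurd hw h
    · convert key (-s / v.1 0) 0 using 1
      apply v4_ext <;> simp <;> field_simp
    · convert key 0 (-s / v.1 1) using 1
      apply v4_ext <;> simp <;> field_simp
  · have key : ∀ a, ((![0, 0, -(a ^ 2 * (v.1 2 - d * v.2))],
        -(a ^ 2 * (v.1 2 - d * v.2)) / d) : V4) ∈ Λ := by
      intro a
      convert Λ.add_mem (Λ.sub_mem (hΛ a 0 v hv) hv) (Λ.sub_mem (hΛ (-a) 0 v hv) hv) using 1
      apply v4_ext <;> simp [nrot, Matrix.vecHead, Matrix.vecTail] <;> ring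
    set w := v.1 2 - d * v.2 with hwdef
    rcases le_total 0 (s / w) with h0 | h0
    · have := Λ.neg_mem (key (Real.sqrt (s / w)))
      rw [Real.sq_sqrt h0] at this
      convert this using 1
      apply v4_ext <;> simp <;> field_simp
    · have := key (Real.sqrt (-(s / w)))
      rw [Real.sq_sqrt (by linarith)] at this
      convert this using 1
      apply v4_ext <;> simp <;> field_simp

lemma top_of_line (d : ℝ) (hd : d ≠ 0) (Λ : AddSubgroup V4)
    (hΛ : ∀ a b, ∀ v ∈ Λ, nrot (-d) a b v ∈ Λ)
    (h : ∀ s : ℝ, ((![0, 0, s], s / d) : V4) ∈ Λ) : Λ = ⊤ := by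
  have h' : ∀ s : ℝ, ((![0, 0, s], s / (-d)) : V4) ∈ Λ := by
    refine line_of_mem (-d) (neg_ne_zero.2 hd) Λ hΛ _ (h 1) (Or.inl ?_)
    simp
    field_simp
    norm_num
  rw [eq_top_iff]
  intro v _
  have h1 := hΛ (v.1 0) (v.1 1) _ (h (1/2))
  convert Λ.add_mem h1 (Λ.add_mem (h ((v.1 2 + d * v.2) / 2 - 1 / 2))
    (h' ((v.1 2 - d * v.2) / 2 + (v.1 0 ^ 2 + v.1 1 ^ 2) / 2))) using 1
  apply v4_ext <;> simp [nrot] <;> field_simp <;> ring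

/-- An additive subgroup of `ℝ⁴` invariant under every proper orthochronous Lorentz
transformation is `{0}` or all of `ℝ⁴`. -/
theorem lorentz_invariant_addSubgroup_trivial (c : ℝ) (hc : 0 < c)
    (Λ : AddSubgroup V4)
    (hΛ : ∀ B : V4 →ₗ[ℝ] V4, IsLorentz c B → IsOrthochronous c B → IsProper B →
      ∀ v ∈ Λ, B v ∈ Λ) :
    Λ = ⊥ ∨ Λ = ⊤ := by
  have hN : ∀ d : ℝ, d ≠ 0 → d ^ 2 = c ^ 2 → ∀ a b, ∀ v ∈ Λ, nrot d a b v ∈ Λ :=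
    fun d hd h a b => hΛ _ (nrot_lorentz c d a b hd h) (nrot_ortho c d a b hd h)
      (nrot_proper d a b hd)
  have hp := hN c hc.ne' rfl
  have hm := hN (-c) (neg_ne_zero.2 hc.ne') (by ring)
  rcases Λ.bot_or_exists_ne_zero with h | ⟨v, hv, hv0⟩
  · exact Or.inl h
  right
  by_cases h : v.1 2 - c * v.2 ≠ 0 ∨ v.1 0 ≠ 0 ∨ v.1 1 ≠ 0
  · exact top_of_line c hc.ne' Λ hm (line_of_mem c hc.ne' Λ hp v hv h)
  · push Not at h
    obtain ⟨h1, h2, h3⟩ := h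
    refine top_of_line (-c) (neg_ne_zero.2 hc.ne') Λ (by simpa using hp)
      (line_of_mem (-c) (neg_ne_zero.2 hc.ne') Λ hm v hv (Or.inl ?_))
    intro h4
    have h5 : c * v.2 = 0 := by linarith
    have h6 : v.2 = 0 := (mul_eq_zero.1 h5).resolve_left hc.ne'
    exact hv0 (v4_ext h2 h3 (by simp; linarith) h6)
end
end

section
/- Every equivalence relation on ℝ⁴ that is invariant under the proper orthochronous Poincaré group 𝒫↑⁺ is trivial, i.e., it is either the identity relation or the total relation. -/
noncomputable section

/-- The Minkowski form as a bilinear map. -/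
def minkB (c : ℝ) : V4 →ₗ[ℝ] V4 →ₗ[ℝ] ℝ :=
  LinearMap.mk₂ ℝ (mink c)
    (by intro x y z; simp only [mink, Fin.sum_univ_three, Prod.fst_add, Prod.snd_add, Pi.add_apply]; ring)
    (by intro a x y; simp only [mink, Fin.sum_univ_three, Prod.smul_fst, Prod.smul_snd, Pi.smul_apply, smul_eq_mul]; ring)
    (by intro x y z; simp only [mink, Fin.sum_univ_three, Prod.fst_add, Prod.snd_add, Pi.add_apply]; ring)
    (by intro a x y; simp only [mink, Fin.sum_univ_three, Prod.smul_fst, Prod.smul_snd, Pi.smul_apply, smul_eq_mul]; ring)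

theorem minkB_apply (c : ℝ) (x y : V4) : minkB c x y = mink c x y := rfl

theorem minkB_symm (c : ℝ) (x y : V4) : minkB c x y = minkB c y x := by
  simp only [minkB_apply, mink, Fin.sum_univ_three]; ring

/-- Null rotation. -/
def nullRot (c : ℝ) (n e : V4) (s : ℝ) : V4 →ₗ[ℝ] V4 :=
  LinearMap.id + s • ((minkB c n).smulRight e - (minkB c e).smulRight n)
    - (s ^ 2 / 2) • (minkB c n).smulRight n

theorem nullRot_apply (c : ℝ) (n e : V4) (s : ℝ) (x : V4) :
    nullRot c n e s x = x + s • (minkB c n x • e - minkB c e x • n)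
      - (s ^ 2 / 2) • minkB c n x • n := rfl

theorem nullRot_lorentz (c : ℝ) (n e : V4) (s : ℝ) (hnn : minkB c n n = 0)
    (hne : minkB c n e = 0) (hee : minkB c e e = 1) : IsLorentz c (nullRot c n e s) := by
  intro x y
  have hen : minkB c e n = 0 := by rw [minkB_symm, hne]
  rw [← minkB_apply, ← minkB_apply, nullRot_apply, nullRot_apply]
  simp only [map_add, map_sub, map_smul, LinearMap.add_apply, LinearMap.sub_apply,
    LinearMap.smul_apply, smul_eq_mul, hnn, hne, hee, hen, minkB_symm c x n, minkB_symm c x e]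
  ring

theorem nullRot_comp (c : ℝ) (n e : V4) (s t : ℝ) (hnn : minkB c n n = 0)
    (hne : minkB c n e = 0) (hee : minkB c e e = 1) :
    nullRot c n e s ∘ₗ nullRot c n e t = nullRot c n e (s + t) := by
  have hen : minkB c e n = 0 := by rw [minkB_symm, hne]
  refine LinearMap.ext fun x => ?_
  rw [LinearMap.comp_apply, nullRot_apply, nullRot_apply, nullRot_apply]
  simp only [map_add, map_sub, map_smul, smul_eq_mul, hnn, hne, hee, hen]
  module

theorem nullRot_zero (c : ℝ) (n e : V4) : nullRot c n e 0 = LinearMap.id := by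
  refine LinearMap.ext fun x => ?_
  rw [nullRot_apply]; simp

/-- Reflection in `e`. -/
def reflE (c : ℝ) (e : V4) : V4 →ₗ[ℝ] V4 :=
  LinearMap.id - (2 : ℝ) • (minkB c e).smulRight e

theorem reflE_apply (c : ℝ) (e x : V4) : reflE c e x = x - (2 : ℝ) • minkB c e x • e := rfl

theorem nullRot_proper (c : ℝ) (n e : V4) (s : ℝ) (hnn : minkB c n n = 0)
    (hne : minkB c n e = 0) (hee : minkB c e e = 1) : IsProper (nullRot c n e s) := by
  have hen : minkB c e n = 0 := by rw [minkB_symm, hne]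
  have hRR : reflE c e ∘ₗ reflE c e = LinearMap.id := by
    refine LinearMap.ext fun x => ?_
    rw [LinearMap.comp_apply, reflE_apply, reflE_apply]
    simp only [map_sub, map_smul, smul_eq_mul, hee, LinearMap.id_apply]
    module
  have hd : LinearMap.det (reflE c e) * LinearMap.det (reflE c e) = 1 := by
    rw [← LinearMap.det_comp, hRR, LinearMap.det_id]
  have hconj : ∀ t, reflE c e ∘ₗ nullRot c n e t = nullRot c n e (-t) ∘ₗ reflE c e := by
    intro t
    refine LinearMap.ext fun x => ?_
    rw [LinearMap.comp_apply, LinearMap.comp_apply, nullRot_apply, nullRot_apply, reflE_apply,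
      reflE_apply]
    simp only [map_add, map_sub, map_smul, smul_eq_mul, hnn, hne, hee, hen]
    module
  have h1 : ∀ t, LinearMap.det (nullRot c n e t) = LinearMap.det (nullRot c n e (-t)) := by
    intro t
    have h := congrArg LinearMap.det (hconj t)
    rw [LinearMap.det_comp, LinearMap.det_comp] at h
    have h0 : LinearMap.det (reflE c e) ≠ 0 := by
      intro h0; rw [h0] at hd; norm_num at hd
    apply mul_left_cancel₀ h0
    rw [h]; ring
  have h2 : ∀ a b, LinearMap.det (nullRot c n e a) * LinearMap.det (nullRot c n e b)
      = LinearMap.det (nullRot c n e (a + b)) := by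
    intro a b
    rw [← LinearMap.det_comp, nullRot_comp c n e a b hnn hne hee]
  have h3 := h2 (s / 2) (-(s / 2))
  rw [← h1, add_neg_cancel, nullRot_zero, LinearMap.det_id] at h3
  have h4 := h2 (s / 2) (s / 2)
  rw [add_halves] at h4
  unfold IsProper
  rw [← h4, h3]

/-- The null vectors used. -/
def nv (c σ : ℝ) (i : Fin 3) : V4 := (Pi.single i (σ * c), 1)

/-- Spatial unit vectors. -/
def ev (j : Fin 3) : V4 := (Pi.single j 1, 0)

theorem minkB_nv (c σ : ℝ) (i : Fin 3) (x : V4) :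
    minkB c (nv c σ i) x = σ * c * x.1 i - c ^ 2 * x.2 := by
  simp [minkB_apply, mink, nv, Pi.single_apply]

theorem minkB_ev (c : ℝ) (j : Fin 3) (x : V4) :
    minkB c (ev j) x = x.1 j := by
  simp [minkB_apply, mink, ev, Pi.single_apply]

/-- For a timelike vector, the time component sign is detected by the null vector. -/
theorem timelike_iff (c : ℝ) (hc : 0 < c) (σ : ℝ) (hσ : σ ^ 2 = 1) (i : Fin 3) (u : V4)
    (hu : mink c u u < 0) : 0 < u.2 ↔ minkB c (nv c σ i) u < 0 := by
  have h1 : (σ * u.1 i) ^ 2 < (c * u.2) ^ 2 := by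
    have h2 : u.1 i * u.1 i ≤ ∑ k, u.1 k * u.1 k :=
      Finset.single_le_sum (f := fun k => u.1 k * u.1 k)
        (fun k _ => mul_self_nonneg _) (Finset.mem_univ i)
    have : (σ * u.1 i) ^ 2 = u.1 i * u.1 i := by rw [mul_pow, hσ]; ring
    unfold mink at hu
    nlinarith
  have h3 := sq_lt_sq.mp h1
  have key : minkB c (nv c σ i) u = c * (σ * u.1 i - c * u.2) := by rw [minkB_nv]; ring
  rw [key]
  constructor
  · intro h
    rw [abs_of_pos (mul_pos hc h)] at h3
    have := le_abs_self (σ * u.1 i)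
    exact mul_neg_of_pos_of_neg hc (by linarith)
  · intro h
    by_contra h4
    push Not at h4
    rw [abs_of_nonpos (mul_nonpos_of_nonneg_of_nonpos hc.le h4)] at h3
    have := neg_abs_le (σ * u.1 i)
    have : 0 < c * (σ * u.1 i - c * u.2) := mul_pos hc (by linarith)
    linarith

theorem nullRot_ortho (c : ℝ) (hc : 0 < c) (σ : ℝ) (hσ : σ ^ 2 = 1) (i : Fin 3) (e : V4) (s : ℝ)
    (hnn : minkB c (nv c σ i) (nv c σ i) = 0)
    (hne : minkB c (nv c σ i) e = 0) (hee : minkB c e e = 1) :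
    IsOrthochronous c (nullRot c (nv c σ i) e s) := by
  rintro u ⟨h1, h2⟩
  have h3 : mink c (nullRot c (nv c σ i) e s u) (nullRot c (nv c σ i) e s u) < 0 := by
    rw [nullRot_lorentz c _ e s hnn hne hee]; exact h1
  refine ⟨h3, ?_⟩
  rw [timelike_iff c hc σ hσ i _ h3]
  rw [timelike_iff c hc σ hσ i _ h1] at h2
  rw [nullRot_apply]
  simp only [map_add, map_sub, map_smul, smul_eq_mul, hnn, hne]
  linarith

/-- Every equivalence relation on `ℝ⁴` invariant under the proper orthochronous
Poincaré group (all maps `x ↦ Bx + b` with `B` a proper orthochronous Lorentz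
transformation) is trivial: it is the identity relation or the total relation. -/
theorem poincare_invariant_equivalence_trivial (c : ℝ) (hc : 0 < c)
    (r : V4 → V4 → Prop) (hr : Equivalence r)
    (hinv : ∀ B : V4 →ₗ[ℝ] V4, IsLorentz c B → IsOrthochronous c B → IsProper B →
      ∀ b : V4, ∀ p q : V4, r p q → r (B p + b) (B q + b)) :
    (∀ p q : V4, r p q ↔ p = q) ∨ (∀ p q : V4, r p q) := by
  have hid := hinv LinearMap.id (fun _ _ => rfl) (fun _ h => h) LinearMap.det_id
  have htr : ∀ b p q : V4, r p q → r (p + b) (q + b) := hid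
  have hsub : ∀ p q : V4, r p q ↔ r 0 (q - p) := by
    intro p q
    constructor
    · intro h
      have := htr (-p) p q h
      rwa [add_neg_cancel, ← sub_eq_add_neg] at this
    · intro h
      have := htr p _ _ h
      rwa [zero_add, sub_add_cancel] at this
  have hneg : ∀ v, r 0 v → r 0 (-v) := by
    intro v h
    have := (hsub _ _).1 (hr.symm h)
    rwa [zero_sub] at this
  have hadd : ∀ v w, r 0 v → r 0 w → r 0 (v + w) := by
    intro v w hv hw
    have := htr v _ _ hw
    rw [zero_add, add_comm w v] at this
    exact hr.trans hv this
  have key : ∀ (σ : ℝ), σ ^ 2 = 1 → ∀ (i : Fin 3) (v : V4), r 0 v →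
      minkB c (nv c σ i) v ≠ 0 → ∀ t : ℝ, r 0 (t • nv c σ i) := by
    intro σ hσ i v hv hnz
    obtain ⟨j, hj⟩ : ∃ j : Fin 3, i ≠ j := ⟨i + 1, by fin_cases i <;> decide⟩
    have hnn : minkB c (nv c σ i) (nv c σ i) = 0 := by
      rw [minkB_nv]; simp only [nv, Pi.single_eq_same]
      linear_combination c ^ 2 * hσ
    have hne : minkB c (nv c σ i) (ev j) = 0 := by
      rw [minkB_nv]; simp [ev, hj]
    have hee : minkB c (ev j) (ev j) = 1 := by
      rw [minkB_ev]; simp [ev]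
    have hB : ∀ s, r 0 (nullRot c (nv c σ i) (ev j) s v - v) := by
      intro s
      have := hinv _ (nullRot_lorentz c _ _ s hnn hne hee)
        (nullRot_ortho c hc σ hσ i _ s hnn hne hee) (nullRot_proper c _ _ s hnn hne hee) 0 0 v hv
      rw [map_zero, add_zero, add_zero] at this
      rw [sub_eq_add_neg]
      exact hadd _ _ this (hneg _ hv)
    have hsq : ∀ s : ℝ, r 0 (-(s ^ 2 * minkB c (nv c σ i) v) • nv c σ i) := by
      intro s
      have := hadd _ _ (hB s) (hB (-s))
      rw [nullRot_apply, nullRot_apply] at this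
      convert this using 1
      module
    have hnonneg : ∀ a : ℝ, 0 ≤ a → r 0 ((a * minkB c (nv c σ i) v) • nv c σ i) := by
      intro a ha
      have := hneg _ (hsq (Real.sqrt a))
      rw [Real.sq_sqrt ha] at this
      convert this using 1
      module
    intro t
    rcases le_total 0 (t / minkB c (nv c σ i) v) with h | h
    · have := hnonneg _ h
      rwa [div_mul_cancel₀ _ hnz] at this
    · have := hneg _ (hnonneg _ (neg_nonneg.2 h))
      rwa [neg_mul, div_mul_cancel₀ _ hnz, neg_smul, neg_neg] at this
  by_cases htriv : ∀ v, r 0 v → v = 0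
  · left
    intro p q
    constructor
    · intro h
      exact (sub_eq_zero.1 (htriv _ ((hsub p q).1 h))).symm
    · rintro rfl; exact hr.refl p
  right
  push Not at htriv
  obtain ⟨v, hv, hv0⟩ := htriv
  have hex : ∃ (σ : ℝ) (i : Fin 3), σ ^ 2 = 1 ∧ minkB c (nv c σ i) v ≠ 0 := by
    by_contra hcon
    push Not at hcon
    apply hv0
    have hp : ∀ i, v.1 i = 0 ∧ v.2 = 0 := by
      intro i
      have h1 := hcon 1 i (by norm_num)
      have h2 := hcon (-1) i (by norm_num)
      rw [minkB_nv] at h1 h2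
      have h3 : c * v.1 i = 0 := by linarith
      have h4 : c ^ 2 * v.2 = 0 := by linarith
      exact ⟨(mul_eq_zero.1 h3).resolve_left hc.ne', (mul_eq_zero.1 h4).resolve_left (by positivity)⟩
    exact Prod.ext (funext fun i => (hp i).1) (hp 0).2
  obtain ⟨σ, i, hσ, hnz⟩ := hex
  have h0 := key σ hσ i v hv hnz
  have h1 : r 0 (nv c σ i) := by simpa using h0 1
  have hall : ∀ (τ : ℝ), τ ^ 2 = 1 → ∀ (k : Fin 3) (t : ℝ), r 0 (t • nv c τ k) := by
    intro τ hτ k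
    by_cases hz : minkB c (nv c τ k) (nv c σ i) = 0
    · rw [minkB_nv] at hz
      have hc2 : c ^ 2 ≠ 0 := by positivity
      by_cases hk : k = i
      · subst hk
        simp only [nv, Pi.single_eq_same] at hz
        have h5 : c ^ 2 * (τ * σ - 1) = 0 := by linarith
        have h6 := (mul_eq_zero.1 h5).resolve_left hc2
        have h7 : τ = σ := by linear_combination σ * h6 - τ * hσ
        rw [h7]; exact h0
      · simp [nv, hk] at hz
        exact absurd hz hc.ne'
    · exact key τ hτ k _ h1 hz
  have hP := hall 1 (by norm_num)
  have hM := hall (-1) (by norm_num)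
  intro p q
  rw [hsub]
  generalize q - p = w
  have hw : w = ((w.1 0 / (2 * c)) • nv c 1 0 + (-(w.1 0 / (2 * c))) • nv c (-1) 0)
      + ((w.1 1 / (2 * c)) • nv c 1 1 + (-(w.1 1 / (2 * c))) • nv c (-1) 1)
      + ((w.1 2 / (2 * c)) • nv c 1 2 + (-(w.1 2 / (2 * c))) • nv c (-1) 2)
      + ((w.2 / 2) • nv c 1 0 + (w.2 / 2) • nv c (-1) 0) := by
    refine Prod.ext (funext fun k => ?_) ?_
    · fin_cases k <;> simp [nv] <;> field_simp <;> ring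
    · simp [nv]
  rw [hw]
  exact hadd _ _ (hadd _ _ (hadd _ _ (hadd _ _ (hP _ _) (hM _ _)) (hadd _ _ (hP _ _) (hM _ _)))
    (hadd _ _ (hP _ _) (hM _ _))) (hadd _ _ (hP _ _) (hM _ _))
end
end

section
/- Let u₁ and u₂ be future timelike vectors in ℝ⁴ that are not proportional (there is no λ ∈ ℝ with u₂ = λ u₁). Then the join R_{u₁} ⊔ R_{u₂} in the lattice of equivalence relations on ℝ⁴, i.e., the smallest equivalence relation containing both R_{u₁} and R_{u₂}, is the total relation relating all pairs of points. -/
noncomputable section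

/-- The standard simultaneity relation determined by a future timelike vector `u`:
`x R_u y ↔ g_c(x - y, u) = 0`. -/
def Rstd (c : ℝ) (u : V4) (x y : V4) : Prop := mink c (x - y) u = 0

/-- If `u₁` and `u₂` are non-proportional future timelike vectors, the join
`R_{u₁} ⊔ R_{u₂}` in the lattice of equivalence relations — i.e. the smallest
equivalence relation containing both, here realized as the equivalence relation
generated by their union — is the total relation. -/
theorem join_of_two_simultaneities_total (c : ℝ) (hc : 0 < c) (u₁ u₂ : V4)
    (h₁ : FutureTimelike c u₁) (h₂ : FutureTimelike c u₂)
    (hprop : ¬ ∃ l : ℝ, u₂ = l • u₁) :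
    ∀ x y : V4, Relation.EqvGen (fun a b => Rstd c u₁ a b ∨ Rstd c u₂ a b) x y := by
  have hi : ∃ i, u₁.2 * u₂.1 i - u₁.1 i * u₂.2 ≠ 0 := by
    by_contra hcon
    push Not at hcon
    apply hprop
    have h0 : u₁.2 ≠ 0 := ne_of_gt h₁.2
    refine ⟨u₂.2 / u₁.2, Prod.ext (funext fun i => ?_) ?_⟩
    · have := hcon i
      simp only [Prod.smul_fst, Pi.smul_apply, smul_eq_mul]
      field_simp
      linarith
    · simp only [Prod.smul_snd, smul_eq_mul]
      field_simp
  obtain ⟨i, hi⟩ := hi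
  have hw : ∃ w : V4, mink c w u₁ = 0 ∧ mink c w u₂ ≠ 0 := by
    refine ⟨(Pi.single i (c ^ 2 * u₁.2), u₁.1 i), ?_, ?_⟩
    · simp only [mink, Pi.single_apply, ite_mul, zero_mul, Finset.sum_ite_eq', Finset.mem_univ, if_true]
      ring
    · have h : c ^ 2 * (u₁.2 * u₂.1 i - u₁.1 i * u₂.2) ≠ 0 := mul_ne_zero (by positivity) hi
      simp only [mink, Pi.single_apply, ite_mul, zero_mul, Finset.sum_ite_eq', Finset.mem_univ, if_true]
      intro h'
      apply h
      linarith
  obtain ⟨w, hw1, hw2⟩ := hw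
  intro x y
  have key : ∀ (t : ℝ) (a b u : V4), mink c (a + t • b) u = mink c a u + t * mink c b u := by
    intro t a b u
    simp only [mink, Fin.sum_univ_three, Prod.fst_add, Prod.snd_add, Prod.smul_fst, Prod.smul_snd,
      Pi.add_apply, Pi.smul_apply, smul_eq_mul]
    ring
  set t : ℝ := - mink c (x - y) u₂ / mink c w u₂ with ht
  refine Relation.EqvGen.trans _ (x + t • w) _ ?_ ?_
  · refine Relation.EqvGen.symm _ _ (Relation.EqvGen.rel _ _ (Or.inl ?_))
    have e : x + t • w - x = 0 + t • w := by abel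
    rw [Rstd, e, key, hw1]
    simp [mink]
  · refine Relation.EqvGen.rel _ _ (Or.inr ?_)
    have e : x + t • w - y = (x - y) + t • w := by abel
    rw [Rstd, e, key, ht]
    field_simp
    ring
end
end

section
/- Let ∼ be a nontrivial 𝒢_N-invariant equivalence relation on ℝ³ × ℝ satisfying the causality condition, i.e., (x̄, t) ∼ (ȳ, s) implies t = s. Then ∼ is absolute simultaneity: (x̄, t) ∼ (ȳ, s) ⟺ t = s. (The same conclusion holds a fortiori for nontrivial 𝒢-invariant equivalence relations satisfying the causality condition, since 𝒢_N is a subgroup of the Galilei group 𝒢.) -/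
theorem newton_aux (P : (Fin 3 → ℝ) → Prop)
    (hadd : ∀ v w, P v → P w → P (v + w))
    (hrot : ∀ S : Matrix (Fin 3) (Fin 3) ℝ, IsSO3 S → ∀ v, P v → P (S.mulVec v))
    (v : Fin 3 → ℝ) (hv : v ≠ 0) (hPv : P v) : ∀ w, P w := by
  have add3 : ∀ a b c x y z : ℝ, P ![a, b, c] → P ![x, y, z] →
      P ![a + x, b + y, c + z] := by
    intro a b c x y z h1 h2
    have := hadd _ _ h1 h2
    convert this using 1
    ext i; fin_cases i <;> simp
  have cyc : ∀ x y z : ℝ, P ![x, y, z] → P ![y, z, x] := by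
    intro x y z h
    have hS : IsSO3 !![0, 1, 0; 0, 0, 1; 1, 0, 0] := by
      constructor
      · ext i j; fin_cases i <;> fin_cases j <;> simp [Matrix.mul_apply, Fin.sum_univ_three]
      · simp [Matrix.det_fin_three]
    have := hrot _ hS _ h
    convert this using 1
    ext i; fin_cases i <;> simp [Matrix.mulVec, dotProduct, Fin.sum_univ_three]
  have flip : ∀ x y z : ℝ, P ![x, y, z] → P ![x, -y, -z] := by
    intro x y z h
    have hS : IsSO3 !![1, 0, 0; 0, -1, 0; 0, 0, -1] := by
      constructor
      · ext i j; fin_cases i <;> fin_cases j <;> simp [Matrix.mul_apply, Fin.sum_univ_three]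
      · simp [Matrix.det_fin_three]
    have := hrot _ hS _ h
    convert this using 1
    ext i; fin_cases i <;> simp [Matrix.mulVec, dotProduct, Fin.sum_univ_three]
  have rot : ∀ c d : ℝ, c ^ 2 + d ^ 2 = 1 → ∀ x : ℝ, P ![x, 0, 0] → P ![c * x, d * x, 0] := by
    intro c d hcd x h
    have hS : IsSO3 !![c, -d, 0; d, c, 0; 0, 0, 1] := by
      constructor
      · ext i j
        fin_cases i <;> fin_cases j <;>
          simp [Matrix.mul_apply, Fin.sum_univ_three] <;> linarith
      · simp [Matrix.det_fin_three]; linarith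
    have := hrot _ hS _ h
    convert this using 1
    ext i; fin_cases i <;> simp [Matrix.mulVec, dotProduct, Fin.sum_univ_three]
  have dbl : ∀ x y z : ℝ, P ![x, y, z] → P ![2 * x, 0, 0] := by
    intro x y z h
    have := add3 _ _ _ _ _ _ h (flip _ _ _ h)
    simpa [two_mul] using this
  have start : ∃ a : ℝ, a ≠ 0 ∧ P ![a, 0, 0] := by
    have hPv' : P ![v 0, v 1, v 2] := by
      convert hPv using 1
      ext i; fin_cases i <;> rfl
    by_cases h0 : v 0 = 0
    · by_cases h1 : v 1 = 0
      · by_cases h2 : v 2 = 0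
        · exfalso
          apply hv
          ext i; fin_cases i <;> simp [h0, h1, h2]
        · exact ⟨2 * v 2, by simpa using h2, dbl _ _ _ (cyc _ _ _ (cyc _ _ _ hPv'))⟩
      · exact ⟨2 * v 1, by simpa using h1, dbl _ _ _ (cyc _ _ _ hPv')⟩
    · exact ⟨2 * v 0, by simpa using h0, dbl _ _ _ hPv'⟩
  obtain ⟨a, ha, hPa⟩ := start
  have small : ∀ c : ℝ, c ^ 2 ≤ 1 → P ![2 * (c * a), 0, 0] := by
    intro c hc
    apply dbl _ _ _ (rot c (Real.sqrt (1 - c ^ 2)) _ a hPa)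
    rw [Real.sq_sqrt (by linarith)]; ring
  have mult : ∀ (n : ℕ) (x : ℝ), P ![x, 0, 0] → P ![((n : ℝ) + 1) * x, 0, 0] := by
    intro n x h
    induction n with
    | zero => simpa using h
    | succ k ih =>
      have := add3 _ _ _ _ _ _ ih h
      convert this using 2
      · push_cast; ring
      · simp
  have axis : ∀ x : ℝ, P ![x, 0, 0] := by
    intro x
    obtain ⟨n, hn⟩ := exists_nat_ge |x / (2 * a)|
    have hn0 : (0 : ℝ) < (n : ℝ) + 1 := by positivity
    have h := mult n _ (small (x / (2 * a) / ((n : ℝ) + 1)) (by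
      rw [sq_le_one_iff_abs_le_one, abs_div, abs_of_pos hn0, div_le_one hn0]
      linarith))
    convert h using 2
    field_simp
  intro w
  have h := add3 _ _ _ _ _ _ (add3 _ _ _ _ _ _ (axis (w 0)) (cyc _ _ _ (cyc _ _ _ (axis (w 1)))))
    (cyc _ _ _ (axis (w 2)))
  convert h using 1
  ext i; fin_cases i <;> simp

/-- A nontrivial Newton-invariant equivalence relation on `ℝ³ × ℝ` satisfying the
causality condition (related events have equal time coordinates) is absolute
simultaneity: `(x̄, t) ∼ (ȳ, s) ↔ t = s`. -/
theorem newton_causal_equivalence_is_absolute_simultaneity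
    (r : ((Fin 3 → ℝ) × ℝ) → ((Fin 3 → ℝ) × ℝ) → Prop) (hr : Equivalence r)
    (hinv : IsNewtonInvariant r)
    (hnot_total : ¬ ∀ p q : (Fin 3 → ℝ) × ℝ, r p q)
    (hnot_id : ¬ ∀ p q : (Fin 3 → ℝ) × ℝ, r p q → p = q)
    (hcausal : ∀ p q : (Fin 3 → ℝ) × ℝ, r p q → p.2 = q.2) :
    ∀ p q : (Fin 3 → ℝ) × ℝ, r p q ↔ p.2 = q.2 := by
  have tr : ∀ (b : (Fin 3 → ℝ) × ℝ) p q, r p q →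
      r (p.1 + b.1, p.2 + b.2) (q.1 + b.1, q.2 + b.2) := by
    intro b p q h
    have := hinv 1 ⟨by simp, by simp⟩ b p q h
    simpa using this
  have key : ∀ w, r (w, 0) (0, 0) := by
    push Not at hnot_id
    obtain ⟨p, q, hpq, hne⟩ := hnot_id
    have ht := hcausal p q hpq
    refine newton_aux (fun w => r (w, 0) (0, 0)) ?hA ?hR (p.1 - q.1) ?hN ?hP
    case hN =>
      intro h
      exact hne (Prod.ext (sub_eq_zero.mp h) ht)
    case hP =>
      have := tr (-q.1, -q.2) p q hpq
      simpa [ht, sub_eq_add_neg] using this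
    case hA =>
      intro v w hv hw
      have := tr (w, 0) _ _ hv
      exact hr.trans (by simpa using this) hw
    case hR =>
      intro S hS v hv
      have := hinv S hS (0, 0) _ _ hv
      simpa using this
  intro p q
  refine ⟨hcausal p q, fun h => ?_⟩
  have := tr q _ _ (key (p.1 - q.1))
  simp only [sub_add_cancel, zero_add] at this
  have hp : p = (p.1, q.2) := Prod.ext rfl h
  rw [hp]
  exact this
end

section
/- Let c > 0, let λ > 0, let A be a 3 × 3 real orthogonal matrix, and let k̄ ∈ ℝ³ with |k̄| < 1/c. Suppose that for every x̄ ∈ ℝ³ and t ∈ ℝ with |x̄| ≤ c t, one has |λ A x̄| ≤ c λ (t + k̄ · (A x̄)). Then k̄ = 0̄. (Consequently, an inertial coordinate system at rest with respect to a Minkowski coordinate system and satisfying two-way light isotropy, whose transition function r' = λ A r, t' = λ(t + k̄ · A r) preserves all causality statements, is itself Minkowskian up to the scale factor λ, and defines the same synchrony.) -/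
noncomputable section

/-- Euclidean norm on `ℝ³`. -/
def enorm3 (v : Fin 3 → ℝ) : ℝ := Real.sqrt (∑ i, v i ^ 2)

/-- Euclidean inner product on `ℝ³`. -/
def dot3 (v w : Fin 3 → ℝ) : ℝ := ∑ i, v i * w i

/-- Let `c > 0`, `λ > 0`, `A` orthogonal, and `k̄` with `|k̄| < 1/c`.  If the
transition map `r' = λ A r`, `t' = λ (t + k̄ ⬝ A r)` sends every event in the
future light cone (`|x̄| ≤ c t`) to an event in the future light cone
(`|λ A x̄| ≤ c λ (t + k̄ ⬝ A x̄)`), then `k̄ = 0̄`: the system is Minkowskian up to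
the scale factor and defines standard synchrony. -/
theorem causality_preserving_isotropic_implies_standard_synchrony
    (c l : ℝ) (hc : 0 < c) (hl : 0 < l)
    (A : Matrix (Fin 3) (Fin 3) ℝ) (hA : A.transpose * A = 1)
    (k : Fin 3 → ℝ) (hk : enorm3 k < 1 / c)
    (hcaus : ∀ (x : Fin 3 → ℝ) (t : ℝ), enorm3 x ≤ c * t →
      enorm3 (l • A.mulVec x) ≤ c * (l * (t + dot3 k (A.mulVec x)))) :
    k = 0 := by
  have hA' : A * A.transpose = 1 := mul_eq_one_comm.mp hA
  have h1 : A.mulVec (-(A.transpose.mulVec k)) = -k := by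
    rw [Matrix.mulVec_neg, Matrix.mulVec_mulVec, hA', Matrix.one_mulVec]
  have h2 : enorm3 (-(A.transpose.mulVec k)) = enorm3 k := by
    have e : ∀ v : Fin 3 → ℝ, ∑ i, v i ^ 2 = dotProduct v v := by
      intro v
      simp [dotProduct, sq]
    unfold enorm3
    rw [e, e, neg_dotProduct_neg, Matrix.dotProduct_mulVec, Matrix.vecMul_transpose,
      Matrix.mulVec_mulVec, hA', Matrix.one_mulVec]
  have h3 : enorm3 (l • (-k)) = l * enorm3 k := by
    unfold enorm3
    have : ∑ i, (l • (-k)) i ^ 2 = l ^ 2 * ∑ i, k i ^ 2 := by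
      rw [Finset.mul_sum]
      refine Finset.sum_congr rfl fun i _ => ?_
      simp [mul_pow]
    rw [this, Real.sqrt_mul (sq_nonneg l), Real.sqrt_sq hl.le]
  have h4 : dot3 k (-k) = -∑ i, k i ^ 2 := by
    simp [dot3, sq]
  have h5 := hcaus (-(A.transpose.mulVec k)) (enorm3 k / c)
    (by rw [h2, mul_div_cancel₀ _ hc.ne'])
  rw [h1, h3, h4] at h5
  have h6 : c * (l * (enorm3 k / c + -∑ i, k i ^ 2))
      = l * enorm3 k - (c * l) * ∑ i, k i ^ 2 := by
    field_simp
    ring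
  rw [h6] at h5
  have h7 : (c * l) * ∑ i, k i ^ 2 ≤ 0 := by linarith
  have h8 : ∑ i, k i ^ 2 ≤ 0 := by
    by_contra h
    push Not at h
    have := mul_pos (mul_pos hc hl) h
    linarith
  have h9 : ∑ i, k i ^ 2 = 0 :=
    le_antisymm h8 (Finset.sum_nonneg fun i _ => sq_nonneg _)
  rw [Finset.sum_eq_zero_iff_of_nonneg (fun i _ => sq_nonneg _)] at h9
  funext i
  exact pow_eq_zero_iff (two_ne_zero) |>.mp (h9 i (Finset.mem_univ i))
end
end

section
/- Let f : ℝ⁴ → ℝ⁴ be a bijection such that for all p, q ∈ ℝ⁴: p ≤ q ⟺ f(p) ≤ f(q), where p ≤ q means that either q = p, or g_c(q − p, q − p) ≤ 0 and (q − p)⁴ > 0. Then f is a conformal orthochronous Poincaré transformation: there exist μ > 0, an orthochronous Lorentz transformation B, and b ∈ ℝ⁴ such that f(x) = μ B x + b for all x ∈ ℝ⁴. -/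
noncomputable section

/-- The causal order on Minkowski space: `p ≤ q` iff `q = p`, or `q - p` is a causal
(timelike or lightlike) vector pointing to the future. -/
def CausalLE (c : ℝ) (p q : V4) : Prop :=
  q = p ∨ (mink c (q - p) (q - p) ≤ 0 ∧ 0 < (q - p).2)


lemma mink_comm (c : ℝ) (x y : V4) : mink c x y = mink c y x := by
  simp only [mink, mul_comm (x.1 _)]; ring

lemma mink_add_left (c : ℝ) (x y z : V4) : mink c (x + y) z = mink c x z + mink c y z := by
  simp only [mink, Prod.fst_add, Prod.snd_add, Pi.add_apply, Fin.sum_univ_three]; ring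

lemma mink_smul_left (c t : ℝ) (x z : V4) : mink c (t • x) z = t * mink c x z := by
  simp only [mink, Prod.smul_fst, Prod.smul_snd, Pi.smul_apply, Fin.sum_univ_three, smul_eq_mul]
  ring

lemma mink_sub_left (c : ℝ) (x y z : V4) : mink c (x - y) z = mink c x z - mink c y z := by
  simp only [mink, Prod.fst_sub, Prod.snd_sub, Pi.sub_apply, Fin.sum_univ_three]; ring

lemma mink_add_right (c : ℝ) (x y z : V4) : mink c z (x + y) = mink c z x + mink c z y := by
  rw [mink_comm, mink_add_left, mink_comm c x, mink_comm c y]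

lemma mink_sub_right (c : ℝ) (x y z : V4) : mink c z (x - y) = mink c z x - mink c z y := by
  rw [mink_comm, mink_sub_left, mink_comm c x, mink_comm c y]

lemma mink_smul_right (c t : ℝ) (x z : V4) : mink c z (t • x) = t * mink c z x := by
  rw [mink_comm, mink_smul_left, mink_comm c x]

lemma mink_zero_right (c : ℝ) (x : V4) : mink c x 0 = 0 := by
  simp [mink]

/-- A vector with zero time component and nonpositive norm is zero. -/
lemma eq_zero_of_time (c : ℝ) (v : V4) (h4 : v.2 = 0) (h : mink c v v ≤ 0) : v = 0 := by
  simp only [mink, Fin.sum_univ_three, h4] at h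
  have h0 : v.1 0 = 0 := by nlinarith [sq_nonneg (v.1 0), sq_nonneg (v.1 1), sq_nonneg (v.1 2)]
  have h1 : v.1 1 = 0 := by nlinarith [sq_nonneg (v.1 0), sq_nonneg (v.1 1), sq_nonneg (v.1 2)]
  have h2 : v.1 2 = 0 := by nlinarith [sq_nonneg (v.1 0), sq_nonneg (v.1 1), sq_nonneg (v.1 2)]
  apply Prod.ext
  · funext i
    fin_cases i <;> simpa
  · simpa using h4

/-- Orthogonal null vectors are parallel. -/
lemma null_parallel (c : ℝ) (k m : V4) (hk0 : k ≠ 0) (hk : mink c k k = 0) (hm : mink c m m = 0)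
    (hkm : mink c k m = 0) : m = (m.2 / k.2) • k := by
  have k4 : k.2 ≠ 0 := fun h => hk0 (eq_zero_of_time c k h hk.le)
  have h : m - (m.2 / k.2) • k = 0 := by
    apply eq_zero_of_time c
    · simp [k4]
    · have hmk := hkm
      rw [mink_comm] at hmk
      simp [mink_sub_left, mink_sub_right, mink_smul_left, mink_smul_right, hk, hm, hkm, hmk]
  exact sub_eq_zero.mp h

def Fut (c : ℝ) (v : V4) : Prop := mink c v v ≤ 0 ∧ 0 ≤ v.2

lemma causal_iff (c : ℝ) (p q : V4) : CausalLE c p q ↔ Fut c (q - p) := by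
  constructor
  · rintro (rfl | ⟨h1, h2⟩)
    · simp [Fut, mink]
    · exact ⟨h1, h2.le⟩
  · rintro ⟨h1, h2⟩
    rcases h2.lt_or_eq with h | h
    · exact Or.inr ⟨h1, h⟩
    · left
      exact sub_eq_zero.mp (eq_zero_of_time c _ h.symm h1)

lemma fut_mink (c : ℝ) (a b : V4) (ha : Fut c a) (hb : Fut c b) : mink c a b ≤ 0 := by
  obtain ⟨ha1, ha2⟩ := ha
  obtain ⟨hb1, hb2⟩ := hb
  have hcs := Finset.sum_mul_sq_le_sq_mul_sq Finset.univ a.1 b.1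
  have e1 : ∑ i, a.1 i ^ 2 ≤ c ^ 2 * a.2 ^ 2 := by
    simp only [mink] at ha1
    simp only [sq (a.1 _)]
    linarith
  have e2 : ∑ i, b.1 i ^ 2 ≤ c ^ 2 * b.2 ^ 2 := by
    simp only [mink] at hb1
    simp only [sq (b.1 _)]
    linarith
  have e3 : (∑ i, a.1 i * b.1 i) ^ 2 ≤ (c ^ 2 * a.2 * b.2) ^ 2 := by
    refine hcs.trans ((mul_le_mul e1 e2 (by positivity) (by positivity)).trans (le_of_eq (by ring)))
  have := abs_le_of_sq_le_sq' e3 (by positivity)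
  simp only [mink]
  linarith [this.2]

lemma fut_smul (c t : ℝ) (ht : 0 ≤ t) (v : V4) (hv : Fut c v) : Fut c (t • v) := by
  refine ⟨?_, ?_⟩
  · rw [mink_smul_left, mink_smul_right]
    have := mul_nonneg ht ht
    nlinarith [hv.1]
  · simpa using mul_nonneg ht hv.2

def ChainI (c : ℝ) (p q : V4) : Prop :=
  ∀ r s, CausalLE c p r → CausalLE c r q → CausalLE c p s → CausalLE c s q →
    CausalLE c r s ∨ CausalLE c s r

lemma null_sub (c : ℝ) (v a : V4) (hv0 : v ≠ 0) (hv : mink c v v = 0) (ha : Fut c a)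
    (hb : Fut c (v - a)) : a = (a.2 / v.2) • v := by
  have h1 := fut_mink c a (v - a) ha hb
  have h2 : mink c v v = mink c a a + 2 * mink c a (v - a) + mink c (v - a) (v - a) := by
    simp only [mink_sub_left, mink_sub_right, mink_comm c v a]; ring
  have h3 : mink c a a = 0 := by linarith [ha.1, hb.1]
  have h4 : mink c a (v - a) = 0 := by linarith [ha.1, hb.1]
  apply null_parallel c v a hv0 hv h3
  rw [mink_sub_right, h3, mink_comm] at h4
  linarith

lemma chain_iff (c : ℝ) (hc : 0 < c) (p q : V4) (hpq : CausalLE c p q) :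
    mink c (q - p) (q - p) = 0 ↔ ChainI c p q := by
  constructor
  · intro h r s hpr hrq hps hsq
    simp only [causal_iff] at *
    by_cases hv0 : q - p = 0
    · left
      have hq : q = p := sub_eq_zero.mp hv0
      subst hq
      have aux : ∀ x, Fut c (x - q) → Fut c (q - x) → x = q := by
        intro x h1 h2
        have h24 := h2.2
        have h14 := h1.2
        simp at h24 h14
        exact sub_eq_zero.mp (eq_zero_of_time c _ (by simp; linarith) h1.1)
      rw [aux r hpr hrq, aux s hps hsq]
      exact hpq
    · have e1 := null_sub c (q - p) (r - p) hv0 h hpr (by simpa using hrq)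
      have e2 := null_sub c (q - p) (s - p) hv0 h hps (by simpa using hsq)
      set x := (r - p).2 / (q - p).2
      set y := (s - p).2 / (q - p).2
      have e3 : s - r = (y - x) • (q - p) := by
        rw [sub_smul, ← e1, ← e2]; abel
      have e4 : r - s = (x - y) • (q - p) := by
        rw [sub_smul, ← e1, ← e2]; abel
      rcases le_total x y with hxy | hxy
      · left; rw [e3]; exact fut_smul c _ (by linarith) _ hpq
      · right; rw [e4]; exact fut_smul c _ (by linarith) _ hpq
  · intro h
    simp only [ChainI, causal_iff] at *
    by_contra hne
    have hlt : mink c (q - p) (q - p) < 0 := lt_of_le_of_ne hpq.1 hne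
    set v := q - p with hv
    obtain ⟨ε, hε, hb1, hb2⟩ : ∃ ε : ℝ, 0 < ε ∧ mink c v v / 4 + ε * v.1 0 + ε ^ 2 ≤ 0 ∧
        mink c v v / 4 - ε * v.1 0 + ε ^ 2 ≤ 0 := by
      set δ := -mink c v v / 4 with hδ
      have hδ0 : 0 < δ := by linarith
      have hA : 0 < |v.1 0| + 1 := by positivity
      refine ⟨min 1 (δ / (|v.1 0| + 1)), by positivity, ?_, ?_⟩
      all_goals
        have m1 := min_le_left 1 (δ / (|v.1 0| + 1))
        have m2 := min_le_right 1 (δ / (|v.1 0| + 1))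
        have m3 : 0 < min 1 (δ / (|v.1 0| + 1)) := by positivity
        set ε := min 1 (δ / (|v.1 0| + 1))
        rw [le_div_iff₀ hA] at m2
        nlinarith [le_abs_self (v.1 0), neg_abs_le (v.1 0),
          mul_le_mul_of_nonneg_left (le_abs_self (v.1 0)) m3.le,
          mul_le_mul_of_nonneg_left (neg_abs_le (v.1 0)) m3.le]
    set w : V4 := (![ε, 0, 0], 0) with hw
    have hww : mink c w w = ε ^ 2 := by simp [mink, hw, Fin.sum_univ_three]; ring
    have hvw : mink c v w = ε * v.1 0 := by simp [mink, hw, Fin.sum_univ_three]; ring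
    have hwv : mink c w v = ε * v.1 0 := by rw [mink_comm]; exact hvw
    have hw2 : w.2 = 0 := rfl
    have f1 : Fut c ((1 / 2 : ℝ) • v + w) := by
      refine ⟨?_, ?_⟩
      · simp only [mink_add_left, mink_add_right, mink_smul_left, mink_smul_right, hww, hvw, hwv]
        linarith
      · have := hpq.2
        simp [hw2]; linarith
    have f2 : Fut c ((1 / 2 : ℝ) • v - w) := by
      refine ⟨?_, ?_⟩
      · simp only [mink_sub_left, mink_sub_right, mink_smul_left, mink_smul_right, hww, hvw, hwv]
        linarith
      · have := hpq.2
        simp [hw2]; linarith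
    have hq : q = p + v := by rw [hv]; abel
    have hh : v = (1 / 2 : ℝ) • v + (1 / 2 : ℝ) • v := by rw [← add_smul]; norm_num
    have g1 : q - (p + ((1 / 2 : ℝ) • v + w)) = (1 / 2 : ℝ) • v - w := by
      rw [hq]; nth_rw 1 [hh]; abel
    have g2 : q - (p + ((1 / 2 : ℝ) • v - w)) = (1 / 2 : ℝ) • v + w := by
      rw [hq]; nth_rw 1 [hh]; abel
    have key := h (p + ((1 / 2 : ℝ) • v + w)) (p + ((1 / 2 : ℝ) • v - w))
      (by simpa using f1) (by rw [g1]; exact f2) (by simpa using f2) (by rw [g2]; exact f1)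
    have g3 : (p + ((1 / 2 : ℝ) • v - w)) - (p + ((1 / 2 : ℝ) • v + w)) = (-2 : ℝ) • w := by
      rw [neg_smul, two_smul]; abel
    have g4 : (p + ((1 / 2 : ℝ) • v + w)) - (p + ((1 / 2 : ℝ) • v - w)) = (2 : ℝ) • w := by
      rw [two_smul]; abel
    rw [g3, g4] at key
    have hp := pow_pos hε 2
    rcases key with key | key <;>
    · have := key.1
      rw [mink_smul_left, mink_smul_right, hww] at this
      linarith

lemma null_iff (c : ℝ) (hc : 0 < c) (p q : V4) : mink c (q - p) (q - p) = 0 ↔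
    (CausalLE c p q ∧ ChainI c p q) ∨ (CausalLE c q p ∧ ChainI c q p) := by
  have hs : mink c (p - q) (p - q) = mink c (q - p) (q - p) := by
    simp only [mink_sub_left, mink_sub_right]; ring
  constructor
  · intro h
    rcases le_total 0 (q - p).2 with h4 | h4
    · have : CausalLE c p q := (causal_iff c p q).2 ⟨h.le, h4⟩
      exact Or.inl ⟨this, (chain_iff c hc p q this).1 h⟩
    · have : CausalLE c q p := (causal_iff c q p).2 ⟨hs ▸ h.le, by simp at h4 ⊢; linarith⟩
      exact Or.inr ⟨this, (chain_iff c hc q p this).1 (hs ▸ h)⟩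
  · rintro (⟨h1, h2⟩ | ⟨h1, h2⟩)
    · exact (chain_iff c hc p q h1).2 h2
    · rw [← hs]; exact (chain_iff c hc q p h1).2 h2

def PresNull (c : ℝ) (f : V4 → V4) : Prop :=
  ∀ p q, mink c (q - p) (q - p) = 0 ↔ mink c (f q - f p) (f q - f p) = 0

lemma presNull (c : ℝ) (hc : 0 < c) (f : V4 → V4) (hbij : Function.Bijective f)
    (hord : ∀ p q : V4, CausalLE c p q ↔ CausalLE c (f p) (f q)) : PresNull c f := by
  have hch : ∀ p q, ChainI c p q ↔ ChainI c (f p) (f q) := by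
    intro p q
    constructor
    · intro h r s
      obtain ⟨r, rfl⟩ := hbij.2 r
      obtain ⟨s, rfl⟩ := hbij.2 s
      simp only [← hord]
      exact h r s
    · intro h r s
      have := h (f r) (f s)
      simpa only [← hord] using this
  intro p q
  rw [null_iff c hc, null_iff c hc, hch p q, hch q p, hord p q, hord q p]

/-- Images of points on a null line lie on a null line. -/
lemma line_image (c : ℝ) (f : V4 → V4) (hinj : Function.Injective f) (hf : PresNull c f)
    (p k : V4) (hk0 : k ≠ 0) (hk : mink c k k = 0) (t : ℝ) :
    ∃ s : ℝ, f (p + t • k) = f p + s • (f (p + k) - f p) := by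
  have h1 : mink c (f (p + k) - f p) (f (p + k) - f p) = 0 := (hf _ _).1 (by simpa using hk)
  have h2 : mink c (f (p + t • k) - f p) (f (p + t • k) - f p) = 0 :=
    (hf _ _).1 (by simp [mink_smul_left, mink_smul_right, hk])
  have h3 : mink c (f (p + t • k) - f (p + k)) (f (p + t • k) - f (p + k)) = 0 :=
    (hf _ _).1 (by
      have : p + t • k - (p + k) = (t - 1) • k := by rw [sub_smul, one_smul]; abel
      rw [this]; simp [mink_smul_left, mink_smul_right, hk])
  have h0 : f (p + k) - f p ≠ 0 := by
    intro h
    exact hk0 (by simpa using hinj (sub_eq_zero.mp h))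
  set m := f (p + k) - f p
  set n := f (p + t • k) - f p
  have e : f (p + t • k) - f (p + k) = n - m := by simp [m, n]
  rw [e] at h3
  have h4 : mink c m n = 0 := by
    simp only [mink_sub_left, mink_sub_right, mink_comm c n m] at h3
    linarith
  refine ⟨n.2 / m.2, ?_⟩
  · rw [← null_parallel c m n h0 h1 h2 h4]; simp [n]

lemma inv_presNull (c : ℝ) (f g : V4 → V4) (hr : Function.RightInverse g f)
    (hf : PresNull c f) : PresNull c g := by
  intro p q
  rw [hf (g p) (g q), hr p, hr q]

lemma line_image_inv (c : ℝ) (f : V4 → V4) (hbij : Function.Bijective f) (hf : PresNull c f)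
    (p k : V4) (hk0 : k ≠ 0) (hk : mink c k k = 0) (s : ℝ) :
    ∃ t : ℝ, f (p + t • k) = f p + s • (f (p + k) - f p) := by
  obtain ⟨g, hl, hr⟩ := Function.bijective_iff_has_inverse.1 hbij
  have hg := inv_presNull c f g hr hf
  have h0 : f (p + k) - f p ≠ 0 := by
    intro h
    exact hk0 (by simpa using hbij.1 (sub_eq_zero.mp h))
  obtain ⟨t, ht⟩ := line_image c g hr.injective hg (f p) (f (p + k) - f p) h0
    ((hf _ _).1 (by simpa using hk)) s
  refine ⟨t, ?_⟩
  have e : f p + (f (p + k) - f p) = f (p + k) := by abel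
  rw [e, hl, hl] at ht
  simp only [add_sub_cancel_left] at ht
  rw [← ht, hr]

/-- Key step: null displacements are transported along transversal null directions. -/
lemma transport (c : ℝ) (f : V4 → V4) (hbij : Function.Bijective f) (hf : PresNull c f)
    (p k l : V4) (hk : mink c k k = 0) (hl : mink c l l = 0) (hkl : mink c k l ≠ 0) :
    f (p + l + k) - f (p + l) = f (p + k) - f p := by
  have hlk : mink c l k ≠ 0 := by rwa [mink_comm]
  have hk0 : k ≠ 0 := by rintro rfl; exact hlk (mink_zero_right c l)
  have hm0 : f (p + k) - f p ≠ 0 := by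
    intro h
    exact hk0 (by simpa using hbij.1 (sub_eq_zero.mp h))
  have hm : mink c (f (p + k) - f p) (f (p + k) - f p) = 0 := (hf _ _).1 (by simpa using hk)
  have hn : mink c (f (p + l + k) - f (p + l)) (f (p + l + k) - f (p + l)) = 0 :=
    (hf _ _).1 (by simpa using hk)
  have hd : mink c (f (p + l) - f p) (f (p + l) - f p) = 0 := (hf _ _).1 (by simpa using hl)
  have hdm : mink c (f (p + l) - f (p + k)) (f (p + l) - f (p + k)) ≠ 0 := by
    rw [Ne, ← hf]
    have : p + l - (p + k) = l - k := by abel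
    rw [this]
    simp only [mink_sub_left, mink_sub_right, mink_comm c k l, hk, hl]
    intro h; apply hlk; linarith
  have hdn : mink c (f (p + l + k) - f p) (f (p + l + k) - f p) ≠ 0 := by
    rw [Ne, ← hf]
    have : p + l + k - p = l + k := by abel
    rw [this]
    simp only [mink_add_left, mink_add_right, mink_comm c k l, hk, hl]
    intro h; apply hlk; linarith
  have h11 : mink c (f (p + l + k) - f (p + k)) (f (p + l + k) - f (p + k)) = 0 :=
    (hf _ _).1 (by
      have : p + l + k - (p + k) = l := by abel
      rw [this]; exact hl)
  have hS := line_image_inv c f hbij hf p k hk0 hk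
  have hT := line_image c f hbij.1 hf (p + l) k hk0 hk
  have hrel : ∀ t : ℝ, mink c (f (p + l + t • k) - f (p + t • k))
      (f (p + l + t • k) - f (p + t • k)) = 0 := fun t => (hf _ _).1 (by
      have : p + l + t • k - (p + t • k) = l := by abel
      rw [this]; exact hl)
  have e1 : f (p + l) - f (p + k) = (f (p + l) - f p) - (f (p + k) - f p) := by abel
  have e2 : f (p + l + k) - f p = (f (p + l) - f p) + (f (p + l + k) - f (p + l)) := by abel
  have e3 : f (p + l + k) - f (p + k) =
    (f (p + l) - f p) + (f (p + l + k) - f (p + l)) - (f (p + k) - f p) := by abel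
  have e4 : ∀ t s s' : ℝ, f (p + t • k) = f p + s • (f (p + k) - f p) →
      f (p + l + t • k) = f (p + l) + s' • (f (p + l + k) - f (p + l)) →
      f (p + l + t • k) - f (p + t • k) = (f (p + l) - f p) +
        s' • (f (p + l + k) - f (p + l)) - s • (f (p + k) - f p) := by
    intro t s s' h1 h2
    rw [h1, h2]; abel
  rw [e1] at hdm
  rw [e2] at hdn
  rw [e3] at h11
  set m := f (p + k) - f p
  set n := f (p + l + k) - f (p + l)
  set d := f (p + l) - f p
  simp only [mink_add_left, mink_add_right, mink_sub_left, mink_sub_right, mink_comm c m d,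
    mink_comm c n d, mink_comm c n m, hm, hn, hd] at hdm hdn h11
  have hdm' : mink c d m ≠ 0 := by intro h; apply hdm; linarith
  have hdn' : mink c d n ≠ 0 := by intro h; apply hdn; linarith
  have hmn : mink c m n = 0 := by
    by_contra hmn
    obtain ⟨t, ht⟩ := hS (mink c d n / mink c m n)
    obtain ⟨s', hs'⟩ := hT t
    have := hrel t
    rw [e4 t _ s' ht hs'] at this
    simp only [mink_add_left, mink_add_right, mink_sub_left, mink_sub_right, mink_smul_left,
      mink_smul_right, mink_comm c m d, mink_comm c n d, mink_comm c n m, hm, hn, hd] at this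
    have hr : mink c d n / mink c m n * mink c m n = mink c d n := div_mul_cancel₀ _ hmn
    have hr0 : mink c d n / mink c m n ≠ 0 := div_ne_zero hdn' hmn
    set a := mink c d n / mink c m n
    have h5 : a * mink c d m = 0 := by linear_combination (-1 / 2) * this - s' * hr
    rcases mul_eq_zero.1 h5 with h | h
    · exact hr0 h
    · exact hdm' h
  have hpar := null_parallel c m n hm0 hm hn hmn
  set a := n.2 / m.2
  have h6 : mink c d n = a * mink c d m := by rw [hpar, mink_smul_right]
  have h7 : (a - 1) * mink c d m = 0 := by rw [hmn] at h11; linarith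
  have h8 : a = 1 := by
    rcases mul_eq_zero.1 h7 with h | h
    · linarith
    · exact absurd h hdm'
  rw [hpar, h8, one_smul]

lemma transport_null (c : ℝ) (hc : 0 < c) (f : V4 → V4) (hbij : Function.Bijective f)
    (hf : PresNull c f) (p k l : V4) (hk : mink c k k = 0) (hl : mink c l l = 0) :
    f (p + l + k) - f (p + l) = f (p + k) - f p := by
  by_cases hk0 : k = 0
  · simp [hk0]
  by_cases hkl : mink c k l = 0
  · have hpar := null_parallel c k l hk0 hk hl hkl
    set t := l.2 / k.2
    have k4 : k.2 ≠ 0 := fun h => hk0 (eq_zero_of_time c k h hk.le)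
    obtain ⟨w, hw4, hw0, hkw⟩ : ∃ w : V4, w.2 = 0 ∧ w ≠ 0 ∧ mink c k w = 0 := by
      by_cases h : k.1 0 = 0
      · refine ⟨(![1, 0, 0], 0), rfl, ?_, ?_⟩
        · intro h
          have := congrFun (congrArg Prod.fst h) 0
          simp at this
        · simp [mink, Fin.sum_univ_three, h]
      · refine ⟨(![-k.1 1, k.1 0, 0], 0), rfl, ?_, ?_⟩
        · intro h'
          have := congrFun (congrArg Prod.fst h') 1
          simp at this
          exact h this
        · simp [mink, Fin.sum_univ_three]; ring
    have hww : 0 < mink c w w := by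
      by_contra h
      exact hw0 (eq_zero_of_time c w hw4 (not_lt.1 h))
    set k' : V4 := (-k.1, k.2) with hk'
    have hk'k' : mink c k' k' = 0 := by rw [← hk]; simp [mink, hk']
    have hkk' : mink c k k' ≠ 0 := by
      have : mink c k k' = mink c k k - 2 * (∑ i, k.1 i * k.1 i) := by
        simp [mink, hk', Fin.sum_univ_three]; ring
      have h2 : ∑ i, k.1 i * k.1 i = c ^ 2 * k.2 ^ 2 := by
        simp only [mink] at hk; linarith
      rw [this, hk, h2]
      have : 0 < c ^ 2 * k.2 ^ 2 := by positivity
      intro h; linarith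
    have hk'w : mink c k' w = 0 := by
      have : mink c k' w = - mink c k w := by simp [mink, hk', Fin.sum_univ_three, hw4]; try ring
      rw [this, hkw, neg_zero]
    set β := -mink c w w / (2 * mink c k k') with hβ
    have hβ0 : β ≠ 0 := div_ne_zero (by linarith) (by simpa using hkk')
    have hβ' : 2 * β * mink c k k' + mink c w w = 0 := by rw [hβ]; field_simp; try ring
    have hwk : mink c w k = 0 := by rw [mink_comm]; exact hkw
    have hwk' : mink c w k' = 0 := by rw [mink_comm]; exact hk'w
    have S : ∀ (s : ℝ) (v : V4), mink c v v = 0 → mink c k v ≠ 0 → s ≠ 0 → ∀ p,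
        f (p + s • v + k) - f (p + s • v) = f (p + k) - f p := by
      intro s v h1 h2 hs p
      apply transport c f hbij hf p k (s • v) hk
      · simp [mink_smul_left, mink_smul_right, h1]
      · rw [mink_smul_right]; exact mul_ne_zero hs h2
    by_cases ht : t = 0
    · rw [hpar, ht]; simp
    have A1 := S (t / 2) (k + β • k' + w)
      (by simp only [mink_add_left, mink_add_right, mink_smul_left, mink_smul_right,
            mink_comm c k' k, hk, hk'k', hkw, hk'w, hwk, hwk']
          linarith)
      (by simp only [mink_add_right, mink_smul_right, hk, hkw]
          simpa using ⟨hβ0, hkk'⟩)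
      (by simpa using ht)
    have A2 := S (t / 2) (k + β • k' - w)
      (by simp only [mink_add_left, mink_add_right, mink_sub_left, mink_sub_right,
            mink_smul_left, mink_smul_right,
            mink_comm c k' k, hk, hk'k', hkw, hk'w, hwk, hwk']
          linarith)
      (by simp only [mink_add_right, mink_sub_right, mink_smul_right, hk, hkw]
          simpa using ⟨hβ0, hkk'⟩)
      (by simpa using ht)
    have A3 := S (-t * β) k' hk'k' hkk' (by simpa using ⟨ht, hβ0⟩)
    have e : p + l = p + (t / 2) • (k + β • k' + w) + (t / 2) • (k + β • k' - w)
        + (-t * β) • k' := by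
      rw [hpar]; module
    rw [e, A3, A2, A1]
  · exact transport c f hbij hf p k l hk hl hkl

/-- Every additively closed predicate containing all null vectors holds everywhere. -/
lemma null_span (c : ℝ) (hc : 0 < c) (P : V4 → Prop) (h0 : ∀ v, mink c v v = 0 → P v)
    (hadd : ∀ v w, P v → P w → P (v + w)) (v : V4) : P v := by
  set s := √(∑ i, v.1 i * v.1 i) with hs
  have hs2 : s * s = ∑ i, v.1 i * v.1 i :=
    Real.mul_self_sqrt (Finset.sum_nonneg fun i _ => mul_self_nonneg _)
  have hsum := hs2
  simp only [Fin.sum_univ_three] at hsum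
  have e : v = (((1 / 2 : ℝ) • v.1, s / (2 * c)) + ((1 / 2 : ℝ) • v.1, -(s / (2 * c)))) +
      ((![c * v.2 / 2, 0, 0], v.2 / 2) + (![-(c * v.2 / 2), 0, 0], v.2 / 2)) := by
    apply Prod.ext
    · funext i
      fin_cases i <;> simp [-Matrix.add_cons, -Matrix.cons_add] <;> ring
    · simp
  rw [e]
  have hcc : c ^ 2 * (s / (2 * c)) * (s / (2 * c)) = s * s / 4 := by field_simp; norm_num
  apply hadd
  · apply hadd
    · apply h0
      simp only [mink, Fin.sum_univ_three, Pi.smul_apply, smul_eq_mul, hcc]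
      linarith
    · apply h0
      simp only [mink, Fin.sum_univ_three, Pi.smul_apply, smul_eq_mul]
      linarith
  · apply hadd
    · apply h0
      simp [mink, Fin.sum_univ_three]; ring
    · apply h0
      simp [mink, Fin.sum_univ_three]; ring

lemma additive (c : ℝ) (hc : 0 < c) (f : V4 → V4) (hbij : Function.Bijective f)
    (hf : PresNull c f) (v p : V4) : f (p + v) - f p = f v - f 0 := by
  have h1 : ∀ k, mink c k k = 0 → ∀ l p, f (p + l + k) - f (p + l) = f (p + k) - f p := by
    intro k hk
    apply null_span c hc
    · intro l hl p
      exact transport_null c hc f hbij hf p k l hk hl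
    · intro v w hv hw p
      rw [← add_assoc, hw, hv]
  revert p
  apply null_span c hc (fun v => ∀ p, f (p + v) - f p = f v - f 0) ?_ ?_ v
  · intro k hk p
    have := h1 k hk p 0
    simpa using this
  · intro v w hv hw p
    have a := hw (p + v)
    have b := hv p
    have a' := hw v
    have : f (p + (v + w)) - f p = (f (p + v + w) - f (p + v)) + (f (p + v) - f p) := by
      rw [add_assoc]; abel
    rw [this, a, b, ← a']; abel

lemma real_additive (h : ℝ → ℝ) (hadd : ∀ x y, h (x + y) = h x + h y)
    (hpos : ∀ x, 0 ≤ x → 0 ≤ h x) (x : ℝ) : h x = x * h 1 := by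
  let φ : ℝ →+ ℝ := AddMonoidHom.mk' h hadd
  have hq : ∀ q : ℚ, h q = q * h 1 := by
    intro q
    have := map_rat_smul φ q (1 : ℝ)
    simpa [φ, Rat.smul_def] using this
  have hmono : ∀ x y, x ≤ y → h x ≤ h y := by
    intro x y hxy
    have := hadd x (y - x)
    have := hpos (y - x) (by linarith)
    rw [add_sub_cancel] at *
    linarith
  have h1 : 0 ≤ h 1 := hpos 1 zero_le_one
  rcases h1.eq_or_lt with h1 | h1
  · obtain ⟨q, hq1⟩ := exists_rat_lt x
    obtain ⟨r, hr1⟩ := exists_rat_gt x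
    have a := hmono _ _ hq1.le
    have b := hmono _ _ hr1.le
    rw [hq] at a b
    rw [← h1] at *
    linarith
  · rcases lt_trichotomy (h x) (x * h 1) with hlt | heq | hgt
    · rw [← div_lt_iff₀ h1] at hlt
      obtain ⟨q, hq1, hq2⟩ := exists_rat_btwn hlt
      have := hmono _ _ hq2.le
      rw [hq] at this
      rw [div_lt_iff₀ h1] at hq1
      linarith
    · exact heq
    · rw [← lt_div_iff₀ h1] at hgt
      obtain ⟨q, hq1, hq2⟩ := exists_rat_btwn hgt
      have := hmono _ _ hq1.le
      rw [hq] at this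
      rw [lt_div_iff₀ h1] at hq2
      linarith

lemma fut_bound (c : ℝ) (hc : 0 < c) (v : V4) (hv : Fut c v) (i : Fin 3) :
    0 ≤ c * v.2 + v.1 i ∧ 0 ≤ c * v.2 - v.1 i := by
  have h1 : v.1 i ^ 2 ≤ (c * v.2) ^ 2 := by
    have := hv.1
    simp only [mink] at this
    have h := Finset.single_le_sum (f := fun i => v.1 i * v.1 i)
      (fun i _ => mul_self_nonneg _) (Finset.mem_univ i)
    nlinarith
  have := abs_le_of_sq_le_sq' h1 (mul_nonneg hc.le hv.2)
  constructor <;> linarith [this.1, this.2]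

lemma homog (c : ℝ) (hc : 0 < c) (F : V4 → V4) (hadd : ∀ x y, F (x + y) = F x + F y)
    (hF : ∀ v, Fut c v → Fut c (F v)) (x : ℝ) (v : V4) : F (x • v) = x • F v := by
  have hfut : ∀ v, Fut c v → F (x • v) = x • F v := by
    intro v hv
    have h1 : ∀ i, c * (F (x • v)).2 + (F (x • v)).1 i = x * (c * (F v).2 + (F v).1 i) := by
      intro i
      have := real_additive (fun x => c * (F (x • v)).2 + (F (x • v)).1 i)
        (by intro a b; simp only [add_smul, hadd, Prod.fst_add, Prod.snd_add, Pi.add_apply]; ring)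
        (by intro a ha; exact (fut_bound c hc _ (hF _ (fut_smul c a ha v hv)) i).1) x
      simpa using this
    have h2 : ∀ i, c * (F (x • v)).2 - (F (x • v)).1 i = x * (c * (F v).2 - (F v).1 i) := by
      intro i
      have := real_additive (fun x => c * (F (x • v)).2 - (F (x • v)).1 i)
        (by intro a b; simp only [add_smul, hadd, Prod.fst_add, Prod.snd_add, Pi.add_apply]; ring)
        (by intro a ha; exact (fut_bound c hc _ (hF _ (fut_smul c a ha v hv)) i).2) x
      simpa using this
    apply Prod.ext
    · funext i
      simp only [Prod.smul_fst, Pi.smul_apply, smul_eq_mul]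
      linarith [h1 i, h2 i]
    · simp only [Prod.smul_snd, smul_eq_mul]
      have := h1 0
      have := h2 0
      apply mul_left_cancel₀ hc.ne'
      linarith
  have hneg : ∀ v, F (-v) = - F v := fun v => map_neg (AddMonoidHom.mk' F hadd) v
  apply null_span c hc (fun v => F (x • v) = x • F v)
  · intro v hv
    rcases le_total 0 v.2 with h | h
    · exact hfut v ⟨hv.le, h⟩
    · have := hfut (-v) ⟨by
        have : mink c (-v) (-v) = mink c v v := by simp [mink]
        rw [this]; exact hv.le, by simpa using h⟩
      rw [smul_neg, hneg, hneg, smul_neg] at this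
      exact neg_injective this
  · intro v w hv hw
    rw [smul_add, hadd, hv, hw, hadd, smul_add]

/-- A linear map preserving null vectors is conformal. -/
lemma conformal (c : ℝ) (hc : 0 < c) (F : V4 →ₗ[ℝ] V4)
    (hF : ∀ v, mink c v v = 0 → mink c (F v) (F v) = 0) (v : V4) :
    mink c (F v) (F v) =
      (-mink c (F (0, 1)) (F (0, 1)) / c ^ 2) * mink c v v := by
  set e : V4 := (0, 1) with he
  have hsp : ∀ u : Fin 3 → ℝ, mink c (F (u, 0)) (F e) = 0 ∧
      c ^ 2 * mink c (F (u, 0)) (F (u, 0)) = -mink c (F e) (F e) * ∑ i, u i * u i := by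
    intro u
    set s := √(∑ i, u i * u i) with hs
    have hs2 : s * s = ∑ i, u i * u i :=
      Real.mul_self_sqrt (Finset.sum_nonneg fun i _ => mul_self_nonneg _)
    have h1 := hF (c • (u, 0) + s • e) (by
      simp only [Fin.sum_univ_three] at hs2
      simp [mink, he, Fin.sum_univ_three]; linear_combination (-c ^ 2) * hs2)
    have h2 := hF (c • (u, 0) - s • e) (by
      simp only [Fin.sum_univ_three] at hs2
      simp [mink, he, Fin.sum_univ_three]; linear_combination (-c ^ 2) * hs2)
    simp only [map_add, map_sub, map_smul, mink_add_left, mink_add_right, mink_sub_left,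
      mink_sub_right, mink_smul_left, mink_smul_right, mink_comm c (F e) (F (u, 0))] at h1 h2
    constructor
    · by_cases hs0 : s = 0
      · have : ((u, 0) : V4) = 0 := by
          apply eq_zero_of_time c _ rfl
          simp [mink, ← hs2, hs0]
        rw [this, map_zero, mink_comm, mink_zero_right]
      · have h3 : c * s * mink c (F (u, 0)) (F e) = 0 := by linarith
        rcases mul_eq_zero.1 h3 with h | h
        · exact absurd h (mul_ne_zero hc.ne' hs0)
        · exact h
    · rw [← hs2]; linarith
  obtain ⟨h1, h2⟩ := hsp v.1
  have hv : v = (v.1, 0) + v.2 • e := by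
    apply Prod.ext <;> simp [he]
  have hL : mink c (F v) (F v) = mink c (F (v.1, 0)) (F (v.1, 0)) +
      v.2 ^ 2 * mink c (F e) (F e) := by
    rw [hv]
    simp only [map_add, map_smul, mink_add_left, mink_add_right, mink_smul_left, mink_smul_right,
      mink_comm c (F e) (F (v.1, 0))]
    have : ((v.1, 0) + v.2 • e : V4) = v := hv.symm
    simp only [this, h1]; ring
  rw [hL]
  field_simp
  have h3 : mink c v v = (∑ i, v.1 i * v.1 i) - c ^ 2 * v.2 * v.2 := rfl
  rw [h3]
  linear_combination h2

/-- Alexandrov's theorem: a bijection of `ℝ⁴` preserving the causal order in both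
directions is a conformal orthochronous Poincaré transformation `x ↦ μ B x + b`
with `μ > 0` and `B` an orthochronous Lorentz transformation. -/
theorem alexandrov_causal_bijection (c : ℝ) (hc : 0 < c) (f : V4 → V4)
    (hbij : Function.Bijective f)
    (hord : ∀ p q : V4, CausalLE c p q ↔ CausalLE c (f p) (f q)) :
    ∃ (μ : ℝ), 0 < μ ∧ ∃ B : V4 →ₗ[ℝ] V4, IsLorentz c B ∧ IsOrthochronous c B ∧
      ∃ b : V4, ∀ x : V4, f x = μ • B x + b := by
  have hf := presNull c hc f hbij hord
  have hA := additive c hc f hbij hf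
  have hadd : ∀ x y, f (x + y) - f 0 = (f x - f 0) + (f y - f 0) := by
    intro x y
    rw [← hA y x]; abel
  have hfut : ∀ v, Fut c v → Fut c (f v - f 0) := by
    intro v hv
    rw [← causal_iff, ← hord, causal_iff]
    simpa using hv
  have hsm := homog c hc (fun v => f v - f 0) hadd hfut
  let F : V4 →ₗ[ℝ] V4 :=
    { toFun := fun v => f v - f 0
      map_add' := hadd
      map_smul' := hsm }
  have hFdef : ∀ v, F v = f v - f 0 := fun v => rfl
  have hnull : ∀ v, mink c v v = 0 ↔ mink c (F v) (F v) = 0 := by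
    intro v
    have := hf 0 v
    rwa [sub_zero] at this
  have hconf := conformal c hc F (fun v => (hnull v).1)
  have hee : mink c ((0, 1) : V4) (0, 1) = -c ^ 2 := by simp [mink]
  set lam := -mink c (F (0, 1)) (F (0, 1)) / c ^ 2 with hlam
  have hlam0 : 0 < lam := by
    apply div_pos _ (by positivity)
    have h1 : mink c (F (0, 1)) (F (0, 1)) ≤ 0 := (hfut (0, 1) ⟨by
      rw [hee]; nlinarith [sq_nonneg c], by simp⟩).1
    have h2 : mink c (F (0, 1)) (F (0, 1)) ≠ 0 := by
      rw [Ne, ← hnull, hee]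
      have : 0 < c ^ 2 := by positivity
      intro h; linarith
    have := lt_of_le_of_ne h1 h2
    linarith
  have hpol : ∀ x y, mink c (F x) (F y) = lam * mink c x y := by
    intro x y
    have h1 := hconf (x + y)
    have h2 := hconf x
    have h3 := hconf y
    simp only [map_add, mink_add_left, mink_add_right, mink_comm c (F y) (F x),
      mink_comm c y x] at h1
    linarith
  have hmu : 0 < √lam := Real.sqrt_pos.2 hlam0
  have hmm : √lam * √lam = lam := Real.mul_self_sqrt hlam0.le
  have hLor : IsLorentz c ((√lam)⁻¹ • F) := by
    intro x y
    simp only [LinearMap.smul_apply, mink_smul_left, mink_smul_right, hpol]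
    rw [← mul_assoc, ← mul_assoc]
    nth_rw 3 [← hmm]
    have : (√lam)⁻¹ * (√lam)⁻¹ * (√lam * √lam) = 1 := by
      generalize √lam = m at *
      field_simp
    rw [this, one_mul]
  refine ⟨√lam, hmu, (√lam)⁻¹ • F, hLor, ?_, f 0, ?_⟩
  · intro u hu
    refine ⟨by rw [hLor]; exact hu.1, ?_⟩
    have h := (hord 0 u).1 (Or.inr (by simpa using hu.imp_left le_of_lt))
    rcases h with h | h
    · have := hbij.1 h
      rw [this] at hu
      exact absurd hu.2 (by simp)
    · have h2 : 0 < (F u).2 := h.2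
      simpa using mul_pos (inv_pos.2 hmu) h2
  · intro x
    simp only [LinearMap.smul_apply]
    rw [smul_inv_smul₀ hmu.ne', hFdef]; abel
end
end

section
/- Fix x̄₀ ∈ ℝ³ and let ℓ = {(x̄₀, s) : s ∈ ℝ} ⊆ ℝ³ × ℝ, and let Ĝ_N be the group of affine bijections of ℝ³ × ℝ of the form (x̄, t) ↦ (λ S (x̄ − x̄₀) + x̄₀, λ t + s₀) with λ > 0, S ∈ SO(3), s₀ ∈ ℝ (the isotropy subgroup of ℓ in the conformal Newton group). Let ∼ be an equivalence relation on ℝ³ × ℝ that is Ĝ_N-invariant, is not the total relation, and such that the equivalence class of some point of ℓ is not contained in ℓ. Then either ∼ is the standard simultaneity (x̄, t) ∼ (ȳ, s) ⟺ t = s, or there exist ĉ > 0 and a sign ε ∈ {+1, −1} such that for every p ∈ ℓ the equivalence class of p is [p] = {p} ∪ {p + (ā, a⁴) : ā ∈ ℝ³, a⁴ ∈ ℝ, |ā| = ĉ |a⁴|, ε a⁴ > 0}, i.e., the classes of points of ℓ are translated half-cones of slope ĉ, all opening in the same time direction. -/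
noncomputable section

/-- Invariance under `Ĝ_N`, the isotropy subgroup of the worldline
`ℓ = {(x̄₀, s) : s ∈ ℝ}` in the conformal Newton group: the maps
`(x̄, t) ↦ (λ S (x̄ - x̄₀) + x̄₀, λ t + s₀)` with `λ > 0`, `S ∈ SO(3)`, `s₀ ∈ ℝ`. -/
def IsGNhatInvariant (x₀ : Fin 3 → ℝ)
    (r : ((Fin 3 → ℝ) × ℝ) → ((Fin 3 → ℝ) × ℝ) → Prop) : Prop :=
  ∀ l : ℝ, 0 < l → ∀ S : Matrix (Fin 3) (Fin 3) ℝ, IsSO3 S → ∀ s₀ : ℝ,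
    ∀ p q : (Fin 3 → ℝ) × ℝ, r p q →
      r (l • S.mulVec (p.1 - x₀) + x₀, l * p.2 + s₀)
        (l • S.mulVec (q.1 - x₀) + x₀, l * q.2 + s₀)


theorem aux_pi (u : Fin 3 → ℝ) (hu : u 0 ^ 2 + u 1 ^ 2 + u 2 ^ 2 ≠ 0) (a b : Fin 3 → ℝ)
    (h : ∀ i, 2 * (a 0 * u 0 + a 1 * u 1 + a 2 * u 2) * u i =
      (u 0 ^ 2 + u 1 ^ 2 + u 2 ^ 2) * (a i + b i)) :
    ∃ S, IsSO3 S ∧ S.mulVec a = b := by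
  obtain ⟨m, hm⟩ : ∃ m, m * (u 0 ^ 2 + u 1 ^ 2 + u 2 ^ 2) = 1 := ⟨_, inv_mul_cancel₀ hu⟩
  have h0 := h 0
  have h1 := h 1
  have h2 := h 2
  generalize u 0 = x at *
  generalize u 1 = y at *
  generalize u 2 = z at *
  refine ⟨!![2*m*x*x-1, 2*m*x*y, 2*m*x*z; 2*m*y*x, 2*m*y*y-1, 2*m*y*z;
    2*m*z*x, 2*m*z*y, 2*m*z*z-1], ⟨?_, ?_⟩, ?_⟩
  · ext i j
    fin_cases i <;> fin_cases j <;>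
      simp [Matrix.mul_apply, Fin.sum_univ_three] <;> grind
  · simp [Matrix.det_fin_three]
    grind
  · ext i
    fin_cases i <;> simp [Matrix.mulVec, dotProduct, Fin.sum_univ_three]
    · linear_combination m * h0 + (a 0 + b 0) * hm
    · linear_combination m * h1 + (a 1 + b 1) * hm
    · linear_combination m * h2 + (a 2 + b 2) * hm

theorem aux_sq_ne (u : Fin 3 → ℝ) (hu : u ≠ 0) : u 0 ^ 2 + u 1 ^ 2 + u 2 ^ 2 ≠ 0 := by
  intro h
  apply hu
  ext i
  fin_cases i <;> simp <;> nlinarith [sq_nonneg (u 0), sq_nonneg (u 1), sq_nonneg (u 2)]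

theorem aux_rot (a b : Fin 3 → ℝ)
    (h : a 0 ^ 2 + a 1 ^ 2 + a 2 ^ 2 = b 0 ^ 2 + b 1 ^ 2 + b 2 ^ 2) :
    ∃ S, IsSO3 S ∧ S.mulVec a = b := by
  by_cases hu : a + b = 0
  · have hb : ∀ i, a i + b i = 0 := fun i => congrFun hu i
    by_cases h1 : a 0 = 0 ∧ a 1 = 0
    · refine aux_pi ![1, 0, 0] (by simp) a b ?_
      intro i
      rw [hb]
      simp [h1.1]
    · refine aux_pi ![a 1, - a 0, 0] ?_ a b ?_
      · simp
        intro h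
        apply h1
        constructor <;> nlinarith [sq_nonneg (a 0), sq_nonneg (a 1)]
      · intro i
        rw [hb]
        simp
        left
        ring
  · refine aux_pi (a + b) (aux_sq_ne _ hu) a b ?_
    intro i
    simp only [Pi.add_apply]
    linear_combination (a i + b i) * h

theorem aux_enorm_sq (a : Fin 3 → ℝ) : enorm3 a ^ 2 = a 0 ^ 2 + a 1 ^ 2 + a 2 ^ 2 := by
  unfold enorm3
  rw [Real.sq_sqrt (by positivity), Fin.sum_univ_three]

theorem aux_enorm_nonneg (a : Fin 3 → ℝ) : 0 ≤ enorm3 a := Real.sqrt_nonneg _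

theorem aux_enorm_pos (a : Fin 3 → ℝ) (ha : a ≠ 0) : 0 < enorm3 a := by
  refine lt_of_le_of_ne (aux_enorm_nonneg a) ?_
  intro h
  apply aux_sq_ne a ha
  rw [← aux_enorm_sq, ← h]
  ring

theorem aux_one : IsSO3 1 := by
  constructor <;> simp

theorem aux_move (x₀ : Fin 3 → ℝ)
    (r : ((Fin 3 → ℝ) × ℝ) → ((Fin 3 → ℝ) × ℝ) → Prop)
    (hinv : IsGNhatInvariant x₀ r) (s k s' l : ℝ) (a b : Fin 3 → ℝ) (hl : 0 < l)
    (h : r (x₀, s) (x₀ + a, s + k)) (hab : enorm3 b = l * enorm3 a) :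
    r (x₀, s') (x₀ + b, s' + l * k) := by
  have h2 := congrArg (fun x => x ^ 2) hab
  simp only [mul_pow, aux_enorm_sq] at h2
  obtain ⟨S, hS, hSa⟩ := aux_rot (l • a) b (by simp only [Pi.smul_apply, smul_eq_mul]; linarith)
  have := hinv l hl S hS (s' - l * s) _ _ h
  simp only [sub_self, Matrix.mulVec_zero, smul_zero, zero_add, add_sub_cancel_left,
    ← Matrix.mulVec_smul, hSa] at this
  convert this using 2
  · ring
  · rw [add_comm]
  · ring

/-- Sarkar–Stachel version of Malament's theorem for the conformal Newton isotropy
group of the line `ℓ = {(x̄₀, s)}`: a `Ĝ_N`-invariant equivalence relation which is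
not total and for which the class of some point of `ℓ` is not contained in `ℓ` is
either standard simultaneity `t = s`, or its classes at points of `ℓ` are translated
half-cones `[p] = {p} ∪ {p + (ā, a⁴) : |ā| = ĉ |a⁴|, ε a⁴ > 0}` of some slope
`ĉ > 0`, all opening in the same time direction `ε`. -/
theorem GNhat_invariant_equivalences (x₀ : Fin 3 → ℝ)
    (r : ((Fin 3 → ℝ) × ℝ) → ((Fin 3 → ℝ) × ℝ) → Prop) (hr : Equivalence r)
    (hinv : IsGNhatInvariant x₀ r)
    (hnot_total : ¬ ∀ p q : (Fin 3 → ℝ) × ℝ, r p q)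
    (hclass : ∃ p q : (Fin 3 → ℝ) × ℝ, p.1 = x₀ ∧ r p q ∧ q.1 ≠ x₀) :
    (∀ p q : (Fin 3 → ℝ) × ℝ, r p q ↔ p.2 = q.2) ∨
    ∃ chat : ℝ, 0 < chat ∧ ∃ ε : ℝ, (ε = 1 ∨ ε = -1) ∧
      ∀ p : (Fin 3 → ℝ) × ℝ, p.1 = x₀ →
        ∀ q : (Fin 3 → ℝ) × ℝ, r p q ↔
          (q = p ∨ ∃ (a : Fin 3 → ℝ) (a4 : ℝ), q = (p.1 + a, p.2 + a4) ∧
            enorm3 a = chat * |a4| ∧ 0 < ε * a4) := by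
  obtain ⟨⟨p1, p2⟩, ⟨q1, q2⟩, hp, hpq, hq⟩ := hclass
  simp only at hp hq
  subst hp
  obtain ⟨a, rfl⟩ : ∃ a, q1 = p1 + a := ⟨q1 - p1, by simp⟩
  obtain ⟨c, rfl⟩ : ∃ c, q2 = p2 + c := ⟨q2 - p2, by ring⟩
  have ha : a ≠ 0 := by simpa using hq
  have hn := aux_enorm_pos a ha
  set n := enorm3 a with hndef
  obtain ⟨k, rfl⟩ : ∃ k, c = k * n := ⟨c / n, by field_simp⟩
  have hz : enorm3 0 = 0 := by simp [enorm3]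
  -- the cone lies in the class
  have cone : ∀ s b, r (p1, s) (p1 + b, s + k * enorm3 b) := by
    intro s b
    by_cases hb : b = 0
    · subst hb
      simp only [hz, add_zero, mul_zero]
      exact hr.refl _
    · have hb' := aux_enorm_pos b hb
      have := aux_move p1 r hinv p2 (k * n) s (enorm3 b / n) a b (by positivity) hpq
        (by field_simp; rfl)
      convert this using 3
      field_simp
  -- distinct points on the line are unrelated
  have line : ∀ s t, r (p1, s) (p1, t) → s = t := by
    intro s t hst
    by_contra hne
    apply hnot_total
    have up : ∀ u v, u < v → r (p1, u) (p1, v) := by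
      intro u v huv
      rcases lt_or_gt_of_ne hne with hlt | hlt
      · have := aux_move p1 r hinv s (t - s) u ((v - u) / (t - s)) 0 0
          (div_pos (by linarith) (by linarith)) (by simpa using hst) (by simp [hz])
        rw [div_mul_cancel₀ _ (by linarith)] at this
        simpa using this
      · have := aux_move p1 r hinv t (s - t) u ((v - u) / (s - t)) 0 0
          (div_pos (by linarith) (by linarith)) (by simpa using hr.symm hst) (by simp [hz])
        rw [div_mul_cancel₀ _ (by linarith)] at this
        simpa using this
    have all : ∀ u v, r (p1, u) (p1, v) := by
      intro u v
      rcases lt_trichotomy u v with h | h | h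
      · exact up u v h
      · rw [h]; exact hr.refl _
      · exact hr.symm (up v u h)
    have all' : ∀ q : (Fin 3 → ℝ) × ℝ, r (p1, 0) q := by
      rintro ⟨x, t⟩
      have := cone (t - k * enorm3 (x - p1)) (x - p1)
      simp only [add_sub_cancel, sub_add_cancel] at this
      exact hr.trans (all _ _) this
    intro p q
    exact hr.trans (hr.symm (all' p)) (all' q)
  have char : ∀ s b c, r (p1, s) (p1 + b, s + c) ↔ c = k * enorm3 b := by
    intro s b c
    constructor
    · intro h
      have h2 := cone (s + c - k * enorm3 b) b
      simp only [sub_add_cancel] at h2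
      have := line _ _ (hr.trans h (hr.symm h2))
      linarith
    · rintro rfl
      exact cone s b
  by_cases hk : k = 0
  · left
    subst hk
    have key : ∀ q : (Fin 3 → ℝ) × ℝ, r (p1, q.2) q := by
      rintro ⟨x, t⟩
      have := cone t (x - p1)
      simpa using this
    rintro p q
    constructor
    · intro h
      exact line _ _ (hr.trans (key p) (hr.trans h (hr.symm (key q))))
    · intro h
      have := key p
      rw [h] at this
      exact hr.trans (hr.symm this) (key q)
  · right
    refine ⟨1 / |k|, by positivity, SignType.sign k, ?_, ?_⟩
    · rcases lt_or_gt_of_ne hk with h | h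
      · right; simp [h]
      · left; simp [h]
    · rintro ⟨p1', s⟩ hp ⟨q1, q2⟩
      simp only at hp
      subst hp
      obtain ⟨b, rfl⟩ : ∃ b, q1 = p1' + b := ⟨q1 - p1', by simp⟩
      obtain ⟨c, rfl⟩ : ∃ c, q2 = s + c := ⟨q2 - s, by ring⟩
      rw [char]
      constructor
      · rintro rfl
        by_cases hb : b = 0
        · left; subst hb; simp [hz]
        · right
          have hb' := aux_enorm_pos b hb
          refine ⟨b, _, rfl, ?_, ?_⟩
          · rw [abs_mul, abs_of_pos hb']
            field_simp
          · rw [← mul_assoc, sign_mul_self]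
            positivity
      · rintro (h | ⟨b', c', h, h1, h2⟩)
        · simp only [Prod.mk.injEq, add_eq_left] at h
          rw [h.1, h.2, hz, mul_zero]
        · simp only [Prod.mk.injEq, add_right_inj] at h
          obtain ⟨rfl, rfl⟩ := h
          rw [h1]
          rcases lt_or_gt_of_ne hk with h | h
          · simp [h] at h2
            rw [abs_of_neg h, abs_of_neg h2]
            field_simp
          · simp [h] at h2
            rw [abs_of_pos h, abs_of_pos h2]
            field_simp
end
end
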